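/- arXiv:1406.0167 — 5 statements merged into one kernel-verified Lean document; each statement's English description precedes it below -/
import Mathlib

section
/- Let ℓ, r, d be positive integers with r > ℓ, and let V ∈ ℝ^{d×ℓ} satisfy V^T V = I_ℓ. Then there exists a sampling-and-rescaling matrix R ∈ ℝ^{d×r} such that for every y ∈ ℝ^ℓ, (1 − √(ℓ/r))² · ‖Vy‖₂² ≤ ‖R^T V y‖₂² ≤ (1 + √(ℓ/r))² · ‖Vy‖₂². -/
open Matrix

/-- Euclidean norm of a vector in ℝ^n. -/
noncomputable def euclNorm {n : ℕ} (x : Fin n → ℝ) : ℝ := Real.sqrt (∑ i, x i ^ 2)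

/-- `R ∈ ℝ^{d×r}` is a sampling-and-rescaling matrix: each column is a positive
multiple of a standard basis vector of ℝ^d. -/
def IsSamplingRescaling {d r : ℕ} (R : Matrix (Fin d) (Fin r) ℝ) : Prop :=
  ∃ (idx : Fin r → Fin d) (w : Fin r → ℝ),
    (∀ t, 0 < w t) ∧ ∀ t i, R i t = w t * (if i = idx t then 1 else 0)

section Helpers

variable {n : ℕ}


lemma posDef_re {M : Matrix (Fin n) (Fin n) ℝ} (h : M.PosDef) (x : Fin n → ℝ) (hx : x ≠ 0) :
    0 < x ⬝ᵥ (M *ᵥ x) := by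
  have := h.dotProduct_mulVec_pos hx
  simpa using this

lemma posSemidef_re {M : Matrix (Fin n) (Fin n) ℝ} (h : M.PosSemidef) (x : Fin n → ℝ) :
    0 ≤ x ⬝ᵥ (M *ᵥ x) := by
  have := h.dotProduct_mulVec_nonneg x
  simpa using this

lemma ct_eq (M : Matrix (Fin n) (Fin n) ℝ) : Mᴴ = Mᵀ := by
  ext i j; simp

lemma dotProduct_self_nonneg (x : Fin n → ℝ) : 0 ≤ x ⬝ᵥ x :=
  Finset.sum_nonneg fun i _ => mul_self_nonneg (x i)

lemma posDef_symm {M : Matrix (Fin n) (Fin n) ℝ} (h : M.PosDef) : Mᵀ = M := by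
  rw [← ct_eq]; exact h.isHermitian

lemma posDef_mul_inv {M : Matrix (Fin n) (Fin n) ℝ} (h : M.PosDef) : M * M⁻¹ = 1 :=
  mul_nonsing_inv _ ((isUnit_iff_isUnit_det _).1 h.isUnit)

lemma posDef_inv_mul {M : Matrix (Fin n) (Fin n) ℝ} (h : M.PosDef) : M⁻¹ * M = 1 :=
  nonsing_inv_mul _ ((isUnit_iff_isUnit_det _).1 h.isUnit)

lemma posDef_of {M : Matrix (Fin n) (Fin n) ℝ} (hs : Mᵀ = M)
    (h : ∀ x : Fin n → ℝ, x ≠ 0 → 0 < x ⬝ᵥ (M *ᵥ x)) : M.PosDef := by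
  refine PosDef.of_dotProduct_mulVec_pos ?_ ?_
  · unfold IsHermitian; rw [ct_eq]; exact hs
  · intro x hx; simpa using h x hx

lemma symm_dot {M : Matrix (Fin n) (Fin n) ℝ} (hs : Mᵀ = M) (x y : Fin n → ℝ) :
    x ⬝ᵥ (M *ᵥ y) = (M *ᵥ x) ⬝ᵥ y := by
  rw [dotProduct_mulVec, ← mulVec_transpose, hs]

lemma cs {M : Matrix (Fin n) (Fin n) ℝ} (h : M.PosDef) (v x : Fin n → ℝ) :
    (v ⬝ᵥ x) ^ 2 ≤ (v ⬝ᵥ (M⁻¹ *ᵥ v)) * (x ⬝ᵥ (M *ᵥ x)) := by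
  by_cases hx : x = 0
  · simp [hx]
  have hp := posDef_re h x hx
  have hs := posDef_symm h
  set a := x ⬝ᵥ (M *ᵥ x)
  set b := v ⬝ᵥ x with hb
  set c := v ⬝ᵥ (M⁻¹ *ᵥ v) with hc
  have key := posSemidef_re h.posSemidef (a • (M⁻¹ *ᵥ v) - b • x)
  have hMv : M *ᵥ (M⁻¹ *ᵥ v) = v := by rw [mulVec_mulVec, posDef_mul_inv h, one_mulVec]
  have e : (a • (M⁻¹ *ᵥ v) - b • x) ⬝ᵥ (M *ᵥ (a • (M⁻¹ *ᵥ v) - b • x))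
      = a * (a * c - b ^ 2) := by
    have e1 : (M⁻¹ *ᵥ v) ⬝ᵥ (M *ᵥ x) = b := by rw [symm_dot hs, hMv]
    have e2 : (M⁻¹ *ᵥ v) ⬝ᵥ v = c := dotProduct_comm _ _
    have e3 : x ⬝ᵥ v = b := dotProduct_comm _ _
    simp only [mulVec_sub, mulVec_smul, hMv, sub_dotProduct, dotProduct_sub, smul_dotProduct,
      dotProduct_smul, smul_eq_mul, e1, e2, e3]
    change _ - b * (_ - b * a) = _
    ring
  rw [e] at key
  have := nonneg_of_mul_nonneg_right key hp
  linarith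

lemma sm_posDef {N : Matrix (Fin n) (Fin n) ℝ} (h : N.PosDef) (v : Fin n → ℝ) (s : ℝ)
    (hs : 0 < 1 + s * (v ⬝ᵥ (N⁻¹ *ᵥ v))) : (N + s • vecMulVec v v).PosDef := by
  apply posDef_of
  · simp [posDef_symm h, transpose_vecMulVec]
  · intro x hx
    have hp := posDef_re h x hx
    have hc := cs h v x
    have e : x ⬝ᵥ ((N + s • vecMulVec v v) *ᵥ x) = x ⬝ᵥ (N *ᵥ x) + s * (v ⬝ᵥ x) ^ 2 := by
      rw [add_mulVec, dotProduct_add, smul_mulVec, dotProduct_smul, vecMulVec_mulVec]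
      simp only [op_smul_eq_smul, dotProduct_smul, smul_eq_mul, dotProduct_comm x v]
      ring
    rw [e]
    rcases le_or_gt 0 s with h0 | h0
    · positivity
    · nlinarith

lemma sm_trace {N : Matrix (Fin n) (Fin n) ℝ} (h : N.PosDef) (v : Fin n → ℝ) (s : ℝ)
    (hs : 0 < 1 + s * (v ⬝ᵥ (N⁻¹ *ᵥ v))) :
    trace (N + s • vecMulVec v v)⁻¹ = trace N⁻¹ -
      s * (v ⬝ᵥ ((N⁻¹ * N⁻¹) *ᵥ v)) / (1 + s * (v ⬝ᵥ (N⁻¹ *ᵥ v))) := by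
  set q := v ⬝ᵥ (N⁻¹ *ᵥ v) with hq
  set c := s / (1 + s * q) with hc
  have hsym := posDef_symm h.inv
  have e : (N + s • vecMulVec v v)⁻¹ = N⁻¹ - c • vecMulVec (N⁻¹ *ᵥ v) (N⁻¹ *ᵥ v) := by
    apply inv_eq_right_inv
    have hMv : N *ᵥ (N⁻¹ *ᵥ v) = v := by rw [mulVec_mulVec, posDef_mul_inv h, one_mulVec]
    have e1 : v ᵥ* N⁻¹ = N⁻¹ *ᵥ v := by rw [← mulVec_transpose, hsym]
    rw [add_mul, mul_sub, mul_sub, posDef_mul_inv h]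
    have e2 : vecMulVec v v * vecMulVec (N⁻¹ *ᵥ v) (N⁻¹ *ᵥ v) = q • vecMulVec v (N⁻¹ *ᵥ v) := by
      rw [mul_vecMulVec, vecMulVec_mulVec, ← hq, op_smul_eq_smul, smul_vecMulVec]
    rw [Matrix.mul_smul, Matrix.mul_smul, Matrix.smul_mul, Matrix.smul_mul, e2, mul_vecMulVec, vecMulVec_mul, hMv, e1]
    ext i j
    simp [vecMulVec_apply]
    have : s - c - s * c * q = 0 := by rw [hc]; field_simp; ring
    linear_combination (v i * (N⁻¹ *ᵥ v) j) * this
  rw [e, trace_sub, trace_smul, trace_vecMulVec, ← mulVec_mulVec, symm_dot hsym v, hc, smul_eq_mul]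
  ring

lemma res {M N : Matrix (Fin n) (Fin n) ℝ} (hM : M.PosDef) (hN : N.PosDef) (δ : ℝ)
    (h : N = M + δ • 1) : M⁻¹ - N⁻¹ = δ • (M⁻¹ * N⁻¹) := by
  have : M⁻¹ * (N - M) * N⁻¹ = M⁻¹ - N⁻¹ := by
    rw [mul_sub, sub_mul, mul_assoc, posDef_mul_inv hN, posDef_inv_mul hM, mul_one, one_mul]
  rw [← this, h]; simp

lemma tr_conj_nonneg {P X : Matrix (Fin n) (Fin n) ℝ} (hP : P.PosSemidef) (hX : Xᵀ = X) :
    0 ≤ trace (X * P * X) := by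
  have h := (hP.conjTranspose_mul_mul_same X).trace_nonneg
  have : Xᴴ = X := by rw [ct_eq]; exact hX
  rwa [this] at h

lemma tr_sq_pos (hn : 0 < n) {N : Matrix (Fin n) (Fin n) ℝ} (hN : N.PosDef) :
    0 < trace (N * N) := by
  have : Nonempty (Fin n) := ⟨⟨0, hn⟩⟩
  have hu := hN.isUnit
  have : (N * N).PosDef := by
    apply posDef_of
    · simp [posDef_symm hN]
    · intro x hx
      rw [← mulVec_mulVec, symm_dot (posDef_symm hN)]
      have : N *ᵥ x ≠ 0 := fun h => by
        have := posDef_re hN x hx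
        simp [h] at this
      exact lt_of_le_of_ne (dotProduct_self_nonneg _)
        (fun h => this (dotProduct_self_eq_zero.1 h.symm))
  exact this.trace_pos

lemma upper_tr {M N : Matrix (Fin n) (Fin n) ℝ} (hM : M.PosDef) (hN : N.PosDef) {δ : ℝ}
    (h : N = M + δ • 1) : δ * trace (N⁻¹ * N⁻¹) ≤ trace M⁻¹ - trace N⁻¹ := by
  have r := res hM hN δ h
  have h1 : trace M⁻¹ - trace N⁻¹ = δ * trace (M⁻¹ * N⁻¹) := by
    rw [← trace_sub, r, trace_smul, smul_eq_mul]
  have h2 : trace (M⁻¹ * N⁻¹) - trace (N⁻¹ * N⁻¹) = δ * trace (N⁻¹ * M⁻¹ * N⁻¹) := by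
    rw [← trace_sub, ← sub_mul, r, smul_mul, trace_smul, smul_eq_mul, trace_mul_comm, mul_assoc]
  have h3 := tr_conj_nonneg hM.inv.posSemidef (posDef_symm hN.inv)
  rw [h1]
  have h4 := mul_nonneg (sq_nonneg δ) h3
  have h5 : δ * (trace (M⁻¹ * N⁻¹) - trace (N⁻¹ * N⁻¹)) =
      δ ^ 2 * trace (N⁻¹ * M⁻¹ * N⁻¹) := by rw [h2]; ring
  linarith

lemma lower_tr (hn : 0 < n) {M N : Matrix (Fin n) (Fin n) ℝ} (hM : M.PosDef) (hN : N.PosDef) {δ : ℝ}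
    (hδ : 0 < δ) (h : N = M - δ • 1) (ht : trace M⁻¹ * δ ≤ 1) :
    0 < trace N⁻¹ - trace M⁻¹ ∧ (trace N⁻¹ - trace M⁻¹) / δ + (trace N⁻¹ - trace M⁻¹) ^ 2 ≤
      trace (N⁻¹ * N⁻¹) := by
  have : Nonempty (Fin n) := ⟨⟨0, hn⟩⟩
  have r := res hM hN (-δ) (by rw [h, neg_smul, sub_eq_add_neg])
  have h1 : trace N⁻¹ - trace M⁻¹ = δ * trace (M⁻¹ * N⁻¹) := by
    have : trace M⁻¹ - trace N⁻¹ = -δ * trace (M⁻¹ * N⁻¹) := by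
      rw [← trace_sub, r, trace_smul, smul_eq_mul]
    linarith
  have h2 : trace (M⁻¹ * N⁻¹) - trace (N⁻¹ * N⁻¹) = -δ * trace (N⁻¹ * M⁻¹ * N⁻¹) := by
    rw [← trace_sub, ← sub_mul, r, smul_mul, trace_smul, smul_eq_mul, trace_mul_comm, mul_assoc]
  have hp := hM.inv.trace_pos
  -- positivity of D via swapped resolvent
  have h4 := upper_tr hN hM (δ := δ) (by rw [h]; abel)
  have h5 := tr_sq_pos hn hM.inv
  have hcs : trace (M⁻¹ * N⁻¹) ^ 2 ≤ trace M⁻¹ * trace (N⁻¹ * M⁻¹ * N⁻¹) := by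
    set a := trace M⁻¹
    set b := trace (M⁻¹ * N⁻¹) with hb
    have hs : (b • (1 : Matrix (Fin n) (Fin n) ℝ) - a • N⁻¹)ᵀ = b • 1 - a • N⁻¹ := by
      rw [transpose_sub, transpose_smul, transpose_smul, posDef_symm hN.inv, transpose_one]
    have h3 := tr_conj_nonneg hM.inv.posSemidef hs
    have e : trace ((b • (1 : Matrix (Fin n) (Fin n) ℝ) - a • N⁻¹) * M⁻¹ * (b • 1 - a • N⁻¹))
      = a * (a * trace (N⁻¹ * M⁻¹ * N⁻¹) - b ^ 2) := by
      have : trace (N⁻¹ * M⁻¹) = b := trace_mul_comm _ _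
      simp only [sub_mul, mul_sub, smul_mul, Matrix.mul_smul, one_mul, mul_one, trace_sub,
        trace_smul, smul_eq_mul, this]
      change b * (b * a) - _ * (_ * b) - (_ - _) = _
      ring
    rw [e] at h3
    have := nonneg_of_mul_nonneg_right h3 hp
    linarith
  refine ⟨by nlinarith, ?_⟩
  rw [h1, mul_div_cancel_left₀ _ hδ.ne', mul_pow]
  have h3 := tr_conj_nonneg hM.inv.posSemidef (posDef_symm hN.inv)
  have : δ ^ 2 * trace (M⁻¹ * N⁻¹) ^ 2 ≤ δ * trace (N⁻¹ * M⁻¹ * N⁻¹) := by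
    calc δ ^ 2 * trace (M⁻¹ * N⁻¹) ^ 2
        ≤ δ ^ 2 * (trace M⁻¹ * trace (N⁻¹ * M⁻¹ * N⁻¹)) := by gcongr
      _ = (trace M⁻¹ * δ) * (δ * trace (N⁻¹ * M⁻¹ * N⁻¹)) := by ring
      _ ≤ 1 * (δ * trace (N⁻¹ * M⁻¹ * N⁻¹)) := by gcongr
      _ = _ := by ring
  linarith

lemma le_trace {P : Matrix (Fin n) (Fin n) ℝ} (hP : P.PosSemidef) (x : Fin n → ℝ) :
    x ⬝ᵥ (P *ᵥ x) ≤ trace P * (x ⬝ᵥ x) := by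
  by_cases hx : x = 0
  · simp [hx]
  have hxx : 0 < x ⬝ᵥ x := lt_of_le_of_ne (dotProduct_self_nonneg _)
    (fun h => hx (dotProduct_self_eq_zero.1 h.symm))
  set a := x ⬝ᵥ x with ha
  set S : Matrix (Fin n) (Fin n) ℝ := a • 1 - vecMulVec x x with hS
  have hsym : Sᵀ = S := by simp [hS, transpose_vecMulVec]
  have hsq : S * S = a • S := by
    have : vecMulVec x x * vecMulVec x x = a • vecMulVec x x := by
      rw [mul_vecMulVec, vecMulVec_mulVec, ← ha, op_smul_eq_smul, smul_vecMulVec]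
    nth_rewrite 1 [hS]
    rw [sub_mul, smul_mul, one_mul]
    nth_rewrite 2 [hS]
    rw [mul_sub, this, Matrix.mul_smul, mul_one, sub_self, sub_zero]
  have h := tr_conj_nonneg hP hsym
  rw [trace_mul_comm, ← mul_assoc, hsq, smul_mul, trace_smul, smul_eq_mul] at h
  have h2 := nonneg_of_mul_nonneg_right h hxx
  rw [hS, sub_mul, smul_mul, one_mul, trace_sub, trace_smul, trace_mul_comm, mul_vecMulVec,
    trace_vecMulVec, dotProduct_comm, smul_eq_mul] at h2
  linarith

lemma shift_posDef {M : Matrix (Fin n) (Fin n) ℝ} (hM : M.PosDef) {δ : ℝ} (hδ : 0 < δ)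
    (ht : trace M⁻¹ * δ < 1) : (M - δ • 1).PosDef := by
  apply posDef_of
  · simp [posDef_symm hM]
  · intro x hx
    have h1 := cs hM x x
    have h2 := le_trace hM.inv.posSemidef x
    have h3 := posDef_re hM x hx
    have hxx : 0 < x ⬝ᵥ x := lt_of_le_of_ne (dotProduct_self_nonneg _)
        (fun h => hx (dotProduct_self_eq_zero.1 h.symm))
    have e : x ⬝ᵥ ((M - δ • 1) *ᵥ x) = x ⬝ᵥ (M *ᵥ x) - δ * (x ⬝ᵥ x) := by
      simp [sub_mulVec, smul_mulVec]
    rw [e]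
    have h4 : (x ⬝ᵥ x) * (x ⬝ᵥ x) ≤ (x ⬝ᵥ x) * (trace M⁻¹ * (x ⬝ᵥ M *ᵥ x)) := by
      nlinarith [mul_le_mul_of_nonneg_right h2 h3.le]
    have h5 := le_of_mul_le_mul_left h4 hxx
    nlinarith

lemma sum_quad {d : ℕ} {V : Matrix (Fin d) (Fin n) ℝ} (hV : Vᵀ * V = 1)
    (B : Matrix (Fin n) (Fin n) ℝ) : ∑ i, V i ⬝ᵥ (B *ᵥ V i) = trace B := by
  have : trace (V * (B * Vᵀ)) = trace B := by
    rw [trace_mul_comm, Matrix.mul_assoc, hV, mul_one]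
  rw [← this]
  rfl

lemma step (hn : 0 < n) {d : ℕ} {V : Matrix (Fin d) (Fin n) ℝ} (hV : Vᵀ * V = 1)
    {A : Matrix (Fin n) (Fin n) ℝ} {u l δU δL εU εL : ℝ} (hδU : 0 < δU) (hδL : 0 < δL)
    (hε : εL * δL < 1) (hp : 1 / δU + εU ≤ 1 / δL - εL)
    (hU : (u • 1 - A).PosDef) (hUt : trace (u • 1 - A)⁻¹ ≤ εU)
    (hL : (A - l • 1).PosDef) (hLt : trace (A - l • 1)⁻¹ ≤ εL) :
    ∃ (i : Fin d) (t : ℝ), 0 < t ∧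
      ((u + δU) • 1 - (A + t • vecMulVec (V i) (V i))).PosDef ∧
      trace ((u + δU) • 1 - (A + t • vecMulVec (V i) (V i)))⁻¹ ≤ εU ∧
      ((A + t • vecMulVec (V i) (V i)) - (l + δL) • 1).PosDef ∧
      trace ((A + t • vecMulVec (V i) (V i)) - (l + δL) • 1)⁻¹ ≤ εL := by
  have hLt' : trace (A - l • 1)⁻¹ * δL < 1 :=
    lt_of_le_of_lt (mul_le_mul_of_nonneg_right hLt hδL.le) hε
  have eU : (u + δU) • 1 - A = (u • 1 - A) + δU • 1 := by rw [add_smul]; abel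
  have eL : A - (l + δL) • 1 = (A - l • 1) - δL • 1 := by rw [add_smul]; abel
  have hNU : ((u + δU) • 1 - A).PosDef := by
    rw [eU]; exact hU.add (PosDef.one.smul hδU)
  have hNL : (A - (l + δL) • 1).PosDef := by
    rw [eL]; exact shift_posDef hL hδL hLt'
  have tU := upper_tr hU hNU eU
  obtain ⟨hDL, tL⟩ := lower_tr hn hL hNL hδL eL hLt'.le
  have pU := tr_sq_pos hn hNU.inv
  set NU := (u + δU) • 1 - A with hNUdef
  set NL := A - (l + δL) • 1 with hNLdef
  set DU := trace (u • 1 - A)⁻¹ - trace NU⁻¹ with hDUdef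
  set DL := trace NL⁻¹ - trace (A - l • 1)⁻¹ with hDLdef
  have hDU : 0 < DU := lt_of_lt_of_le (mul_pos hδU pU) tU
  let fU : Fin d → ℝ := fun i => V i ⬝ᵥ ((NU⁻¹ * NU⁻¹) *ᵥ V i) / DU + V i ⬝ᵥ (NU⁻¹ *ᵥ V i)
  let fL : Fin d → ℝ := fun i => V i ⬝ᵥ ((NL⁻¹ * NL⁻¹) *ᵥ V i) / DL - V i ⬝ᵥ (NL⁻¹ *ᵥ V i)
  have sU : ∑ i, fU i ≤ 1 / δU + εU := by
    simp only [fU, Finset.sum_add_distrib, ← Finset.sum_div, sum_quad hV]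
    have : trace (NU⁻¹ * NU⁻¹) / DU ≤ 1 / δU := by
      rw [div_le_div_iff₀ hDU hδU]; linarith
    linarith
  have sL : 1 / δL - εL ≤ ∑ i, fL i := by
    simp only [fL, Finset.sum_sub_distrib, ← Finset.sum_div, sum_quad hV]
    have : 1 / δL + DL ≤ trace (NL⁻¹ * NL⁻¹) / DL := by
      rw [le_div_iff₀ hDL]
      calc _ = DL / δL + DL ^ 2 := by ring
        _ ≤ _ := tL
    linarith
  have q2 : ∀ i, V i ≠ 0 → 0 < V i ⬝ᵥ ((NU⁻¹ * NU⁻¹) *ᵥ V i) := by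
    intro i hi
    rw [← mulVec_mulVec, symm_dot (posDef_symm hNU.inv)]
    have : NU⁻¹ *ᵥ V i ≠ 0 := fun h => by
      have := posDef_re hNU.inv (V i) hi
      simp [h] at this
    exact lt_of_le_of_ne (dotProduct_self_nonneg _)
        (fun h => this (dotProduct_self_eq_zero.1 h.symm))
  obtain ⟨i, hi, hle⟩ : ∃ i, V i ≠ 0 ∧ fU i ≤ fL i := by
    by_contra! hcon
    obtain ⟨j, hj⟩ : ∃ j, V j ≠ 0 := by
      by_contra! h0
      have hV0 : V = 0 := funext h0
      have : Nonempty (Fin n) := ⟨⟨0, hn⟩⟩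
      rw [hV0] at hV
      simp at hV
    have : ∑ i, fL i < ∑ i, fU i := by
      apply Finset.sum_lt_sum
      · intro i _
        by_cases h : V i = 0
        · simp [fL, fU, h]
        · exact (hcon i h).le
      · exact ⟨j, Finset.mem_univ _, hcon j hj⟩
    linarith
  have hq2 := q2 i hi
  have hq1 := posDef_re hNU.inv (V i) hi
  have hfU : 0 < fU i := by simp only [fU]; positivity
  have hl1 := posDef_re hNL.inv (V i) hi
  have e1 : NU + (-(fU i)⁻¹) • vecMulVec (V i) (V i) =
      (u + δU) • 1 - (A + (fU i)⁻¹ • vecMulVec (V i) (V i)) := by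
    rw [hNUdef, neg_smul]; abel
  have e2 : NL + ((fU i)⁻¹) • vecMulVec (V i) (V i) =
      (A + (fU i)⁻¹ • vecMulVec (V i) (V i)) - (l + δL) • 1 := by
    rw [hNLdef]; abel
  refine ⟨i, (fU i)⁻¹, inv_pos.2 hfU, ?_⟩
  rw [← e1, ← e2]
  set a2 := V i ⬝ᵥ ((NU⁻¹ * NU⁻¹) *ᵥ V i) with ha2
  set a1 := V i ⬝ᵥ (NU⁻¹ *ᵥ V i) with ha1
  set b2 := V i ⬝ᵥ ((NL⁻¹ * NL⁻¹) *ᵥ V i) with hb2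
  set b1 := V i ⬝ᵥ (NL⁻¹ *ᵥ V i) with hb1
  have hfe : fU i = a2 / DU + a1 := rfl
  have hfl : fL i = b2 / DL - b1 := rfl
  rw [hfl] at hle
  set f := fU i
  have hc1 : 1 + -f⁻¹ * a1 = f⁻¹ * (a2 / DU) := by
    have : f⁻¹ * f = 1 := inv_mul_cancel₀ hfU.ne'
    rw [← this]; rw [show a2 / DU = f - a1 by linarith]; ring
  have hc1p : 0 < 1 + -f⁻¹ * a1 := by rw [hc1]; positivity
  have hc2p : 0 < 1 + f⁻¹ * b1 := by positivity
  refine ⟨sm_posDef hNU _ _ hc1p, ?_, sm_posDef hNL _ _ hc2p, ?_⟩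
  · rw [sm_trace hNU _ _ hc1p, ← ha1, ← ha2, hc1]
    have : -f⁻¹ * a2 / (f⁻¹ * (a2 / DU)) = -DU := by field_simp
    rw [this]; linarith
  · rw [sm_trace hNL _ _ hc2p, ← hb1, ← hb2]
    have : DL ≤ f⁻¹ * b2 / (1 + f⁻¹ * b1) := by
      have : f⁻¹ * b2 / (1 + f⁻¹ * b1) = b2 / (f + b1) := by
        field_simp
      rw [this, le_div_iff₀ (by positivity)]
      have : f + b1 ≤ b2 / DL := by linarith
      rw [le_div_iff₀ hDL] at this
      linarith
    linarith

lemma iter (hn : 0 < n) {d : ℕ} (hd : 0 < d) {V : Matrix (Fin d) (Fin n) ℝ} (hV : Vᵀ * V = 1)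
    {δU δL εU εL : ℝ} (hδU : 0 < δU) (hδL : 0 < δL) (hεU : 0 < εU) (hεL : 0 < εL)
    (hε : εL * δL < 1) (hp : 1 / δU + εU ≤ 1 / δL - εL) (k : ℕ) :
    ∃ (idx : ℕ → Fin d) (s : ℕ → ℝ), (∀ t, 0 < s t) ∧
      ((n / εU + k * δU) • 1 -
        ∑ t ∈ Finset.range k, s t • vecMulVec (V (idx t)) (V (idx t))).PosDef ∧
      trace ((n / εU + k * δU) • 1 -
        ∑ t ∈ Finset.range k, s t • vecMulVec (V (idx t)) (V (idx t)))⁻¹ ≤ εU ∧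
      ((∑ t ∈ Finset.range k, s t • vecMulVec (V (idx t)) (V (idx t))) -
        (-(n / εL) + k * δL) • 1).PosDef ∧
      trace ((∑ t ∈ Finset.range k, s t • vecMulVec (V (idx t)) (V (idx t))) -
        (-(n / εL) + k * δL) • 1)⁻¹ ≤ εL := by
  have hn' : (0 : ℝ) < n := by exact_mod_cast hn
  induction k with
  | zero =>
    have key : ∀ ε : ℝ, 0 < ε → trace (((n : ℝ) / ε) • (1 : Matrix (Fin n) (Fin n) ℝ))⁻¹ ≤ ε := by
      intro ε hε
      have : (((n : ℝ) / ε) • (1 : Matrix (Fin n) (Fin n) ℝ))⁻¹ = (ε / n) • 1 := by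
        apply inv_eq_right_inv
        rw [smul_mul, Matrix.mul_smul, smul_smul, mul_one]
        rw [show (n : ℝ) / ε * (ε / n) = 1 by field_simp, one_smul]
      rw [this, trace_smul, trace_one]
      simp [hn'.ne']
    refine ⟨fun _ => ⟨0, hd⟩, fun _ => 1, fun _ => one_pos, ?_, ?_, ?_, ?_⟩
    · simpa using PosDef.one.smul (div_pos hn' hεU)
    · simpa using key εU hεU
    · simpa using PosDef.one.smul (div_pos hn' hεL)
    · simpa using key εL hεL
  | succ k ih =>
    obtain ⟨idx, s, hs, h1, h2, h3, h4⟩ := ih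
    obtain ⟨i, t, ht, g⟩ := step hn hV hδU hδL hε hp h1 h2 h3 h4
    refine ⟨Function.update idx k i, Function.update s k t, ?_, ?_⟩
    · intro j
      by_cases h : j = k
      · subst h; simpa using ht
      · simpa [h] using hs j
    · have e : ∑ j ∈ Finset.range (k + 1), Function.update s k t j •
          vecMulVec (V (Function.update idx k i j)) (V (Function.update idx k i j)) =
          ∑ t ∈ Finset.range k, s t • vecMulVec (V (idx t)) (V (idx t)) +
            t • vecMulVec (V i) (V i) := by
        rw [Finset.sum_range_succ]
        congr 1
        · apply Finset.sum_congr rfl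
          intro j hj
          have : j ≠ k := (Finset.mem_range.1 hj).ne
          simp [this]
        · simp
      rw [e]
      have c1 : (n / εU + ((k + 1 : ℕ) : ℝ) * δU) = n / εU + k * δU + δU := by push_cast; ring
      have c2 : (-(n / εL) + ((k + 1 : ℕ) : ℝ) * δL) = -(n / εL) + k * δL + δL := by
        push_cast; ring
      rw [c1, c2]
      exact g

end Helpers

/-- **BSS single-set spectral sparsification (Lemma 1).**
For `V ∈ ℝ^{d×ℓ}` with orthonormal columns and `r > ℓ`, there is a
sampling-and-rescaling matrix `R ∈ ℝ^{d×r}` such that for all `y ∈ ℝ^ℓ`,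
`(1 − √(ℓ/r))² ‖Vy‖² ≤ ‖Rᵀ V y‖² ≤ (1 + √(ℓ/r))² ‖Vy‖²`. -/
theorem bss_spectral_sparsification
    (ℓ r d : ℕ) (hℓ : 0 < ℓ) (hr : 0 < r) (hd : 0 < d) (hrℓ : ℓ < r)
    (V : Matrix (Fin d) (Fin ℓ) ℝ) (hV : Vᵀ * V = 1) :
    ∃ R : Matrix (Fin d) (Fin r) ℝ, IsSamplingRescaling R ∧
      ∀ y : Fin ℓ → ℝ,
        (1 - Real.sqrt ((ℓ : ℝ) / r)) ^ 2 * euclNorm (V.mulVec y) ^ 2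
            ≤ euclNorm (Rᵀ.mulVec (V.mulVec y)) ^ 2 ∧
        euclNorm (Rᵀ.mulVec (V.mulVec y)) ^ 2
            ≤ (1 + Real.sqrt ((ℓ : ℝ) / r)) ^ 2 * euclNorm (V.mulVec y) ^ 2 := by
  have hℓ' : (0 : ℝ) < ℓ := by exact_mod_cast hℓ
  have hr' : (0 : ℝ) < r := by exact_mod_cast hr
  have hlr : (ℓ : ℝ) < r := by exact_mod_cast hrℓ
  obtain ⟨q, hq⟩ : ∃ q, q = Real.sqrt ((r : ℝ) / ℓ) := ⟨_, rfl⟩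
  have hq1 : 1 < q := by
    rw [hq]; apply Real.lt_sqrt_of_sq_lt
    rw [one_pow, lt_div_iff₀ hℓ']; linarith
  have hq0 : 0 < q := by linarith
  have hqm : 0 < q - 1 := by linarith
  have hqsq : (r : ℝ) = q ^ 2 * ℓ := by
    rw [hq, Real.sq_sqrt (by positivity)]; field_simp
  have hinv : Real.sqrt ((ℓ : ℝ) / r) = 1 / q := by
    rw [hq, ← inv_div, Real.sqrt_inv, one_div]
  obtain ⟨idx, s, hs, h1, -, h3, -⟩ := iter hℓ hd hV (δU := (q + 1) / (q - 1)) (δL := 1)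
    (εU := (q - 1) / (q ^ 2 + q)) (εL := 1 / q) (by positivity) one_pos (by positivity)
    (by positivity) (by rw [mul_one, div_lt_one hq0]; exact hq1)
    (by apply le_of_eq; field_simp) r
  obtain ⟨c, hc⟩ : ∃ c, c = (q - 1) / (ℓ * q ^ 3) := ⟨_, rfl⟩
  have hc0 : 0 < c := by rw [hc]; positivity
  have hcu : c * (ℓ / ((q - 1) / (q ^ 2 + q)) + r * ((q + 1) / (q - 1))) = (1 + 1 / q) ^ 2 := by
    rw [hc, hqsq]; field_simp; ring
  have hcl : c * (-(ℓ / (1 / q)) + r * 1) = (1 - 1 / q) ^ 2 := by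
    rw [hc, hqsq]; field_simp; ring
  rw [hinv, ← hcu, ← hcl]
  refine ⟨Matrix.of fun i t => Real.sqrt (c * s t) * (if i = idx t then 1 else 0),
    ⟨fun t => idx t, fun t => Real.sqrt (c * s t),
      fun t => Real.sqrt_pos.2 (mul_pos hc0 (hs t)), fun t i => rfl⟩, fun y => ?_⟩
  have en : ∀ {m : ℕ} (x : Fin m → ℝ), euclNorm x ^ 2 = ∑ i, x i ^ 2 := fun x =>
    Real.sq_sqrt (Finset.sum_nonneg fun i _ => sq_nonneg _)
  have eV : euclNorm (V *ᵥ y) ^ 2 = y ⬝ᵥ y := by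
    rw [en]
    have : (V *ᵥ y) ⬝ᵥ (V *ᵥ y) = y ⬝ᵥ y := by
      rw [dotProduct_mulVec, ← mulVec_transpose, mulVec_mulVec, hV, one_mulVec]
    rw [← this]
    simp [dotProduct, pow_two]
  set A := ∑ t ∈ Finset.range r, s t • vecMulVec (V (idx t)) (V (idx t)) with hA
  have eA : y ⬝ᵥ (A *ᵥ y) = ∑ t : Fin r, s t * (V *ᵥ y) (idx t) ^ 2 := by
    rw [hA, sum_mulVec, dotProduct_sum, Finset.sum_range]
    apply Finset.sum_congr rfl
    intro t _
    rw [smul_mulVec, dotProduct_smul, vecMulVec_mulVec, op_smul_eq_smul,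
      dotProduct_smul, dotProduct_comm y]
    simp only [smul_eq_mul, mulVec]
    ring
  have eR : euclNorm ((Matrix.of fun i (t : Fin r) =>
      Real.sqrt (c * s t) * (if i = idx t then (1 : ℝ) else 0))ᵀ *ᵥ (V *ᵥ y)) ^ 2
      = c * (y ⬝ᵥ (A *ᵥ y)) := by
    rw [en, eA, Finset.mul_sum]
    apply Finset.sum_congr rfl
    intro t _
    have : ((Matrix.of fun i (t : Fin r) =>
      Real.sqrt (c * s t) * (if i = idx t then (1 : ℝ) else 0))ᵀ *ᵥ (V *ᵥ y)) t =
      Real.sqrt (c * s t) * (V *ᵥ y) (idx t) := by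
      generalize V *ᵥ y = z
      simp [mulVec, dotProduct]
    rw [this, mul_pow, Real.sq_sqrt (mul_pos hc0 (hs t)).le]
    ring
  rw [eR, eV, mul_assoc, mul_assoc]
  have g1 := posSemidef_re h1.posSemidef y
  have g3 := posSemidef_re h3.posSemidef y
  rw [sub_mulVec, dotProduct_sub, smul_mulVec, one_mulVec, dotProduct_smul, smul_eq_mul] at g1 g3
  exact ⟨mul_le_mul_of_nonneg_left (by linarith) hc0.le,
    mul_le_mul_of_nonneg_left (by linarith) hc0.le⟩
end

section
/- Let ℓ, r, d be positive integers with r > ℓ, and let V ∈ ℝ^{d×ℓ} satisfy V^T V = I_ℓ. Then there exists a sampling-and-rescaling matrix R ∈ ℝ^{d×r} such that ‖V^T V − V^T R R^T V‖₂ = ‖I_ℓ − V^T R R^T V‖₂ ≤ 3√(ℓ/r). -/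
open Matrix

/-- Spectral norm (ℓ₂ operator norm) of a real matrix: the supremum of `‖A x‖₂`
over unit vectors `x`. -/
noncomputable def specNorm {m n : ℕ} (A : Matrix (Fin m) (Fin n) ℝ) : ℝ :=
  sSup {c : ℝ | ∃ x : Fin n → ℝ, euclNorm x = 1 ∧ c = euclNorm (A.mulVec x)}

/-- Barrier invariant: `C` is positive definite with inverse of trace at most `ε`. -/
def BarrierGood {n : ℕ} (C : Matrix (Fin n) (Fin n) ℝ) (ε : ℝ) : Prop :=
  (∀ x : Fin n → ℝ, x ≠ 0 → 0 < x ⬝ᵥ (C *ᵥ x)) ∧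
    ∃ B : Matrix (Fin n) (Fin n) ℝ, B * C = 1 ∧ B.trace ≤ ε

lemma quad_diag {n : ℕ} (c x : Fin n → ℝ) :
    x ⬝ᵥ (diagonal c *ᵥ x) = ∑ k, c k * x k ^ 2 := by
  simp only [dotProduct, mulVec_diagonal]
  exact Finset.sum_congr rfl fun k _ => by ring

lemma good_diag_pos {n : ℕ} {c : Fin n → ℝ} {ε : ℝ} (h : BarrierGood (diagonal c) ε) :
    (∀ k, 0 < c k) ∧ ∑ k, (c k)⁻¹ ≤ ε := by
  obtain ⟨hp, B, hB, ht⟩ := h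
  have hc : ∀ k, 0 < c k := by
    intro k
    have := hp (Pi.single k 1) (by simp)
    simpa [mulVec_single_one, diagonal] using this
  refine ⟨hc, ?_⟩
  have hB2 : B = diagonal (fun k => (c k)⁻¹) := by
    have h1 : diagonal c * diagonal (fun k => (c k)⁻¹) = 1 := by
      rw [diagonal_mul_diagonal, ← diagonal_one]
      congr 1; funext k; exact mul_inv_cancel₀ (hc k).ne'
    calc B = B * (diagonal c * diagonal (fun k => (c k)⁻¹)) := by rw [h1, mul_one]
      _ = _ := by rw [← mul_assoc, hB, one_mul]
  rw [hB2, trace_diagonal] at ht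
  exact ht

lemma good_rank1 {n : ℕ} {c v : Fin n → ℝ} {ε t : ℝ} (hc : ∀ k, 0 < c k)
    (hq : 0 < 1 + t * ∑ k, v k ^ 2 / c k)
    (ht : ∑ k, (c k)⁻¹ - t / (1 + t * ∑ k, v k ^ 2 / c k) * ∑ k, v k ^ 2 / c k ^ 2 ≤ ε) :
    BarrierGood (diagonal c + t • vecMulVec v v) ε := by
  set q := ∑ k, v k ^ 2 / c k with hqd
  constructor
  · intro x hx
    have e1 : x ⬝ᵥ ((diagonal c + t • vecMulVec v v) *ᵥ x)
        = ∑ k, c k * x k ^ 2 + t * (∑ k, v k * x k) ^ 2 := by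
      rw [add_mulVec, dotProduct_add, quad_diag, smul_mulVec, vecMulVec_mulVec]
      simp only [dotProduct_smul, smul_eq_mul, op_smul_eq_smul]
      rw [dotProduct_comm x v]
      simp only [dotProduct]; ring
    rw [e1]
    have hX : 0 < ∑ k, c k * x k ^ 2 := by
      obtain ⟨k, hk⟩ := Function.ne_iff.mp hx
      apply Finset.sum_pos'
      · intro i _; have := hc i; positivity
      · exact ⟨k, Finset.mem_univ _, mul_pos (hc k) (by have : x k ≠ 0 := hk; positivity)⟩
    have hcs : (∑ k, v k * x k) ^ 2 ≤ q * ∑ k, c k * x k ^ 2 := by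
      apply Finset.sum_sq_le_sum_mul_sum_of_sq_eq_mul
      · intro i _; have := hc i; positivity
      · intro i _; have := hc i; positivity
      · intro i _; have := (hc i).ne'; field_simp
    rcases le_total 0 t with h0 | h0
    · positivity
    · nlinarith [mul_pos hq hX]
  · set w : Fin n → ℝ := fun k => v k / c k with hw
    refine ⟨diagonal (fun k => (c k)⁻¹) - (t / (1 + t * q)) • vecMulVec w w, ?_, ?_⟩
    · have h1 : diagonal (fun k => (c k)⁻¹) * diagonal c = 1 := by
        rw [diagonal_mul_diagonal, ← diagonal_one]
        congr 1; funext k; exact inv_mul_cancel₀ (hc k).ne'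
      have h2 : diagonal (fun k => (c k)⁻¹) * vecMulVec v v = vecMulVec w v := by
        ext i j; simp [diagonal_mul, vecMulVec_apply, hw]; ring
      have h3 : vecMulVec w w * diagonal c = vecMulVec w v := by
        ext i j; have := (hc j).ne'; simp [mul_diagonal, vecMulVec_apply, hw]; field_simp
      have h4 : vecMulVec w w * vecMulVec v v = q • vecMulVec w v := by
        rw [vecMulVec_mul_vecMulVec]
        have : w ⬝ᵥ v = q := by
          simp only [dotProduct, hw, hqd]
          exact Finset.sum_congr rfl fun k _ => by ring
        rw [this]
        ext i j; simp [vecMulVec_apply]; ring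
      rw [sub_mul, mul_add, mul_add, h1, mul_smul_comm, h2, smul_mul_assoc, h3, smul_mul_assoc,
        mul_smul_comm, h4]
      ext i j
      simp only [Matrix.add_apply, Matrix.sub_apply, Matrix.smul_apply, smul_eq_mul]
      field_simp
      ring
    · rw [trace_sub, trace_diagonal, trace_smul, trace_vecMulVec]
      have : w ⬝ᵥ w = ∑ k, v k ^ 2 / c k ^ 2 := by
        simp only [dotProduct, hw]
        exact Finset.sum_congr rfl fun k _ => by ring
      rw [this]; exact ht

lemma good_conj {n : ℕ} {C Q : Matrix (Fin n) (Fin n) ℝ} {ε : ℝ} (h : BarrierGood C ε)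
    (h1 : Q * Qᵀ = 1) (h2 : Qᵀ * Q = 1) : BarrierGood (Q * C * Qᵀ) ε := by
  obtain ⟨hp, B, hB, ht⟩ := h
  refine ⟨?_, Q * B * Qᵀ, ?_, ?_⟩
  · intro x hx
    have := hp (Qᵀ *ᵥ x) (by
      intro h0
      apply hx
      have := congrArg (fun y => Q *ᵥ y) h0
      simpa [mulVec_mulVec, h1] using this)
    rw [← mulVec_mulVec, ← mulVec_mulVec, dotProduct_mulVec, ← mulVec_transpose]
    exact this
  · calc Q * B * Qᵀ * (Q * C * Qᵀ) = Q * (B * ((Qᵀ * Q) * C)) * Qᵀ := by simp only [mul_assoc]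
      _ = 1 := by rw [h2, one_mul, hB, mul_one, h1]
  · rw [trace_mul_comm, ← mul_assoc, h2, one_mul]; exact ht

lemma step_diag {n d : ℕ} (hn : 0 < n) {lam : Fin n → ℝ} {V : Matrix (Fin d) (Fin n) ℝ}
    (hV : ∀ k, ∑ i, V i k ^ 2 = 1) {u l e δ εU : ℝ} (he : 0 < e) (he1 : e < 1) (hδ : 0 < δ)
    (hpar : δ⁻¹ + εU ≤ 1 - e)
    (hU : BarrierGood (diagonal (fun k => u - lam k)) εU)
    (hL : BarrierGood (diagonal (fun k => lam k - l)) e) :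
    ∃ i, ∃ s : ℝ, 0 < s ∧
      BarrierGood (diagonal (fun k => u + δ - lam k) + (-s) • vecMulVec (V i) (V i)) εU ∧
      BarrierGood (diagonal (fun k => lam k - (l + 1)) + s • vecMulVec (V i) (V i)) e := by
  obtain ⟨ha, hSa⟩ := good_diag_pos hU
  obtain ⟨hb, hSb⟩ := good_diag_pos hL
  haveI : Nonempty (Fin n) := ⟨⟨0, hn⟩⟩
  have hne : (Finset.univ : Finset (Fin n)).Nonempty := Finset.univ_nonempty
  have hm : ∀ k, 0 < u + δ - lam k := fun k => by linarith [ha k]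
  have hN : ∀ k, 0 < lam k - (l + 1) := by
    intro k
    have h1 : (lam k - l)⁻¹ ≤ e :=
      (Finset.single_le_sum (f := fun k => (lam k - l)⁻¹)
        (fun i _ => (inv_pos.mpr (hb i)).le) (Finset.mem_univ k)).trans hSb
    have h2 : 1 < lam k - l := by
      by_contra hcon
      have := (one_le_inv₀ (hb k)).mpr (not_lt.mp hcon)
      linarith
    linarith
  have swap : ∀ f : Fin n → ℝ, ∑ i, ∑ k, V i k ^ 2 / f k = ∑ k, (f k)⁻¹ := by
    intro f
    rw [Finset.sum_comm]
    refine Finset.sum_congr rfl fun k _ => ?_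
    rw [← Finset.sum_div, hV, one_div]
  -- upper
  set ΔU := ∑ k, (u - lam k)⁻¹ - ∑ k, (u + δ - lam k)⁻¹ with hΔU
  have hU1 : δ * ∑ k, ((u + δ - lam k) ^ 2)⁻¹ < ΔU := by
    rw [hΔU, Finset.mul_sum, ← Finset.sum_sub_distrib]
    apply Finset.sum_lt_sum_of_nonempty hne
    intro k _
    have h1 := ha k
    have h2 := hm k
    rw [inv_sub_inv h1.ne' h2.ne', ← div_eq_mul_inv]
    have : u + δ - lam k - (u - lam k) = δ := by ring
    rw [this]
    apply div_lt_div_of_pos_left hδ (by positivity)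
    nlinarith
  have hPU : 0 < ∑ k, ((u + δ - lam k) ^ 2)⁻¹ :=
    Finset.sum_pos (fun k _ => by have := hm k; positivity) hne
  have hΔU0 : 0 < ΔU := lt_trans (by positivity) hU1
  -- lower
  set S := ∑ k, (lam k - l)⁻¹ with hS
  set T := ∑ k, (lam k - (l + 1))⁻¹ with hT
  set P := ∑ k, ((lam k - (l + 1)) ^ 2)⁻¹ with hP
  set W := ∑ k, (lam k - l)⁻¹ * ((lam k - (l + 1)) ^ 2)⁻¹ with hW
  have hΔ : T - S = ∑ k, (lam k - l)⁻¹ * (lam k - (l + 1))⁻¹ := by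
    rw [hT, hS, ← Finset.sum_sub_distrib]
    refine Finset.sum_congr rfl fun k _ => ?_
    have h1 := (hb k).ne'
    have h2 := (hN k).ne'
    field_simp
    ring
  have hΔ0 : 0 < T - S := by
    rw [hΔ]
    exact Finset.sum_pos (fun k _ => mul_pos (inv_pos.mpr (hb k)) (inv_pos.mpr (hN k))) hne
  have hPW : P - (T - S) = W := by
    rw [hΔ, hP, hW, ← Finset.sum_sub_distrib]
    refine Finset.sum_congr rfl fun k _ => ?_
    have h1 := (hb k).ne'
    have h2 := (hN k).ne'
    field_simp
    ring
  have hW0 : 0 ≤ W := Finset.sum_nonneg fun k _ => by have := hb k; have := hN k; positivity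
  have hCS : (T - S) ^ 2 ≤ S * W := by
    rw [hΔ]
    apply Finset.sum_sq_le_sum_mul_sum_of_sq_eq_mul
    · intro k _; have := hb k; positivity
    · intro k _; have := hb k; have := hN k; positivity
    · intro k _
      have h1 := (hb k).ne'
      have h2 := (hN k).ne'
      field_simp
  have hlow : 1 - S ≤ P / (T - S) - T := by
    have : 1 + (T - S) ≤ P / (T - S) := by
      rw [le_div_iff₀ hΔ0]
      nlinarith
    linarith
  -- averaging
  have hsum : ∑ i, ((∑ k, V i k ^ 2 / (u + δ - lam k) ^ 2) / ΔU + ∑ k, V i k ^ 2 / (u + δ - lam k))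
      < ∑ i, ((∑ k, V i k ^ 2 / (lam k - (l + 1)) ^ 2) / (T - S)
        - ∑ k, V i k ^ 2 / (lam k - (l + 1))) := by
    rw [Finset.sum_add_distrib, Finset.sum_sub_distrib, ← Finset.sum_div, ← Finset.sum_div,
      swap (fun k => (u + δ - lam k) ^ 2), swap (fun k => u + δ - lam k),
      swap (fun k => (lam k - (l + 1)) ^ 2), swap (fun k => lam k - (l + 1))]
    have h1 : (∑ k, ((u + δ - lam k) ^ 2)⁻¹) / ΔU < δ⁻¹ := by
      rw [div_lt_iff₀ hΔU0, inv_mul_eq_div, lt_div_iff₀ hδ]; linarith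
    have h2 : ∑ k, (u + δ - lam k)⁻¹ ≤ εU := by linarith
    linarith
  obtain ⟨i, -, hi⟩ := Finset.exists_lt_of_sum_lt hsum
  set pM := ∑ k, V i k ^ 2 / (u + δ - lam k) ^ 2 with hpM
  set qM := ∑ k, V i k ^ 2 / (u + δ - lam k) with hqM
  set pN := ∑ k, V i k ^ 2 / (lam k - (l + 1)) ^ 2 with hpN
  set qN := ∑ k, V i k ^ 2 / (lam k - (l + 1)) with hqN
  have hpM0 : 0 ≤ pM := Finset.sum_nonneg fun k _ => by have := hm k; positivity
  have hqM0 : 0 ≤ qM := Finset.sum_nonneg fun k _ => by have := hm k; positivity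
  have hqN0 : 0 ≤ qN := Finset.sum_nonneg fun k _ => by have := hN k; positivity
  set y := pN / (T - S) - qN with hy
  have hdiv : 0 ≤ pM / ΔU := by positivity
  have hy0 : 0 < y := by linarith
  have hyq : 0 < y - qM := by linarith
  refine ⟨i, y⁻¹, inv_pos.mpr hy0, ?_, ?_⟩
  · have e1 : 1 + -y⁻¹ * qM = (y - qM) / y := by field_simp; ring
    apply good_rank1 hm
    · rw [← hqM, e1]; positivity
    · rw [← hqM, ← hpM, e1]
      have e2 : -y⁻¹ / ((y - qM) / y) * pM = - (pM / (y - qM)) := by field_simp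
      rw [e2]
      have : pM / (y - qM) ≤ ΔU := by
        rw [div_le_iff₀ hyq]
        have : pM / ΔU ≤ y - qM := by linarith
        rw [div_le_iff₀ hΔU0] at this
        linarith
      linarith
  · have e1 : 1 + y⁻¹ * qN = (y + qN) / y := by field_simp
    apply good_rank1 hN
    · rw [← hqN, e1]; positivity
    · rw [← hqN, ← hpN, e1]
      have e2 : y⁻¹ / ((y + qN) / y) * pN = pN / (y + qN) := by field_simp
      rw [e2]
      have hyy : 0 < y + qN := by linarith
      have : T - S ≤ pN / (y + qN) := by
        rw [le_div_iff₀ hyy, hy]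
        have : (T - S) * (pN / (T - S) - qN + qN) = pN := by field_simp; ring
        linarith
      linarith

lemma step_gen {n d : ℕ} (hn : 0 < n) {A : Matrix (Fin n) (Fin n) ℝ} (hA : Aᵀ = A)
    {V : Matrix (Fin d) (Fin n) ℝ}
    (hV : Vᵀ * V = 1) {u l e δ εU : ℝ} (he : 0 < e) (he1 : e < 1) (hδ : 0 < δ)
    (hpar : δ⁻¹ + εU ≤ 1 - e)
    (hU : BarrierGood (u • 1 - A) εU) (hL : BarrierGood (A - l • 1) e) :
    ∃ i, ∃ s : ℝ, 0 < s ∧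
      BarrierGood ((u + δ) • 1 - (A + s • vecMulVec (V i) (V i))) εU ∧
      BarrierGood ((A + s • vecMulVec (V i) (V i)) - (l + 1) • 1) e := by
  have hH : A.IsHermitian := by
    rw [IsHermitian, conjTranspose_eq_transpose_of_trivial, hA]
  obtain ⟨Q, lam, hQ1, hQ2, hAQ⟩ : ∃ (Q : Matrix (Fin n) (Fin n) ℝ) (lam : Fin n → ℝ),
      Q * Qᵀ = 1 ∧ Qᵀ * Q = 1 ∧ A = Q * diagonal lam * Qᵀ := by
    refine ⟨hH.eigenvectorUnitary, hH.eigenvalues, ?_, ?_, ?_⟩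
    · have := (Matrix.mem_unitaryGroup_iff).mp hH.eigenvectorUnitary.2
      simpa [star_eq_conjTranspose] using this
    · have := (Matrix.mem_unitaryGroup_iff').mp hH.eigenvectorUnitary.2
      simpa [star_eq_conjTranspose] using this
    · have := hH.spectral_theorem
      simpa [Unitary.conjStarAlgAut_apply, star_eq_conjTranspose, Function.comp_def] using this
  have conj_sub : ∀ a : ℝ, Qᵀ * (a • 1 - A) * Q = diagonal (fun k => a - lam k) := by
    intro a
    have : Qᵀ * (a • 1 - A) * Q = a • (Qᵀ * Q) - (Qᵀ * Q) * diagonal lam * (Qᵀ * Q) := by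
      rw [mul_sub, sub_mul, hAQ]; simp [mul_assoc]
    rw [this, hQ2, one_mul, mul_one, smul_one_eq_diagonal, diagonal_sub]
  have conj_sub' : ∀ a : ℝ, Qᵀ * (A - a • 1) * Q = diagonal (fun k => lam k - a) := by
    intro a
    rw [← neg_sub, mul_neg, neg_mul, conj_sub, diagonal_neg]
    congr 1; funext k; simp
  have back : ∀ X : Matrix (Fin n) (Fin n) ℝ, Q * (Qᵀ * X * Q) * Qᵀ = X := by
    intro X
    calc Q * (Qᵀ * X * Q) * Qᵀ = (Q * Qᵀ) * X * (Q * Qᵀ) := by simp only [mul_assoc]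
      _ = X := by rw [hQ1, one_mul, mul_one]
  have hvv : ∀ i, Qᵀ * vecMulVec (V i) (V i) * Q = vecMulVec ((V * Q) i) ((V * Q) i) := by
    intro i
    rw [mul_vecMulVec, vecMulVec_mul]
    have e1 : V i ᵥ* Q = (V * Q) i := rfl
    rw [mulVec_transpose, e1]
  have hU' := good_conj (Q := Qᵀ) hU (by simpa using hQ2) (by simpa using hQ1)
  have hL' := good_conj (Q := Qᵀ) hL (by simpa using hQ2) (by simpa using hQ1)
  rw [transpose_transpose, conj_sub] at hU'
  rw [transpose_transpose, conj_sub'] at hL'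
  have hVQ : ∀ k, ∑ i, (V * Q) i k ^ 2 = 1 := by
    intro k
    have : (V * Q)ᵀ * (V * Q) = 1 := by
      rw [transpose_mul]
      calc Qᵀ * Vᵀ * (V * Q) = Qᵀ * (Vᵀ * V) * Q := by simp only [Matrix.mul_assoc]
        _ = 1 := by rw [hV, mul_one, hQ2]
    have := congrFun (congrFun this k) k
    rw [Matrix.mul_apply, one_apply_eq] at this
    rw [← this]
    exact Finset.sum_congr rfl fun i _ => by rw [transpose_apply]; ring
  obtain ⟨i, s, hs, h1, h2⟩ := step_diag hn hVQ he he1 hδ hpar hU' hL'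
  refine ⟨i, s, hs, ?_, ?_⟩
  · have := good_conj h1 hQ1 hQ2
    rw [← conj_sub, ← hvv] at this
    convert this using 1
    rw [mul_add, add_mul, back, mul_smul_comm, smul_mul_assoc, back, neg_smul]
    abel
  · have := good_conj h2 hQ1 hQ2
    rw [← conj_sub', ← hvv] at this
    convert this using 1
    rw [mul_add, add_mul, back, mul_smul_comm, smul_mul_assoc, back]
    abel

lemma iterate_steps {n d : ℕ} (hn : 0 < n) {V : Matrix (Fin d) (Fin n) ℝ}
    (hV : Vᵀ * V = 1) {e δ εU : ℝ} (he : 0 < e) (he1 : e < 1) (hδ : 0 < δ) (hεU : 0 < εU)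
    (hpar : δ⁻¹ + εU ≤ 1 - e) (m : ℕ) :
    ∃ (idx : Fin m → Fin d) (s : Fin m → ℝ), (∀ t, 0 < s t) ∧
      BarrierGood ((n / εU + m * δ) • 1 - ∑ t, s t • vecMulVec (V (idx t)) (V (idx t))) εU ∧
      BarrierGood ((∑ t, s t • vecMulVec (V (idx t)) (V (idx t))) - (-(n / e) + m) • 1) e := by
  have hn' : (0 : ℝ) < n := by exact_mod_cast hn
  have base : ∀ ε : ℝ, 0 < ε → BarrierGood ((n / ε) • (1 : Matrix (Fin n) (Fin n) ℝ)) ε := by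
    intro ε hε
    have := good_rank1 (n := n) (c := fun _ => n / ε) (v := 0) (ε := ε) (t := 0)
      (fun _ => by positivity) (by simp) (by simp; field_simp; rfl)
    simpa [smul_one_eq_diagonal] using this
  induction m with
  | zero =>
    refine ⟨Fin.elim0, Fin.elim0, fun t => t.elim0, ?_, ?_⟩
    · simpa using base εU hεU
    · simpa using base e he
  | succ m ih =>
    obtain ⟨idx, s, hs, h1, h2⟩ := ih
    have hsym : (∑ t, s t • vecMulVec (V (idx t)) (V (idx t)))ᵀ
        = ∑ t, s t • vecMulVec (V (idx t)) (V (idx t)) := by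
      rw [transpose_sum]
      refine Finset.sum_congr rfl fun t _ => ?_
      rw [transpose_smul, transpose_vecMulVec]
    obtain ⟨i, s', hs', h3, h4⟩ := step_gen hn hsym hV he he1 hδ hpar h1 h2
    refine ⟨Fin.snoc idx i, Fin.snoc s s', ?_, ?_, ?_⟩
    · intro t
      refine Fin.lastCases ?_ (fun t => ?_) t
      · simpa using hs'
      · simpa using hs t
    · rw [Fin.sum_univ_castSucc]
      simp only [Fin.snoc_castSucc, Fin.snoc_last]
      convert h3 using 3
      push_cast; ring
    · rw [Fin.sum_univ_castSucc]
      simp only [Fin.snoc_castSucc, Fin.snoc_last]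
      convert h4 using 3
      push_cast; ring

lemma spec_bound {n : ℕ} {H : Matrix (Fin n) (Fin n) ℝ} (hH : Hᵀ = H) {m : ℝ} (hm : 0 < m)
    (h : ∀ x : Fin n → ℝ, |x ⬝ᵥ (H *ᵥ x)| ≤ m * (x ⬝ᵥ x)) : specNorm H ≤ m := by
  have hq : ∀ z : Fin n → ℝ, ∑ i, z i ^ 2 = z ⬝ᵥ z := fun z =>
    Finset.sum_congr rfl fun i _ => by ring
  apply Real.sSup_le _ hm.le
  rintro c ⟨x, hx, rfl⟩
  have hx1 : x ⬝ᵥ x = 1 := by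
    rw [euclNorm, Real.sqrt_eq_one] at hx
    rw [← hq, hx]
  set y := H *ᵥ x with hy
  have hsym : x ⬝ᵥ (H *ᵥ y) = y ⬝ᵥ y := by
    rw [dotProduct_mulVec, ← mulVec_transpose, hH]
  have h1 := (abs_le.mp (h (m • x + y))).2
  have h2 := (abs_le.mp (h (m • x - y))).1
  have hyx : y ⬝ᵥ x = x ⬝ᵥ y := dotProduct_comm _ _
  simp only [mulVec_add, mulVec_sub, mulVec_smul, dotProduct_add, add_dotProduct, dotProduct_sub,
    sub_dotProduct, smul_dotProduct, dotProduct_smul, smul_eq_mul, ← hy, hsym, hx1, hyx] at h1 h2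
  rw [euclNorm, hq]
  apply Real.sqrt_le_iff.mpr ⟨hm.le, ?_⟩
  have h3 : m * (y ⬝ᵥ y) ≤ m * m ^ 2 := by nlinarith
  exact le_of_mul_le_mul_left h3 hm

/-- **Lemma 2 (modified BSS).** For `V ∈ ℝ^{d×ℓ}` with orthonormal columns and
`r > ℓ`, there is a sampling-and-rescaling matrix `R ∈ ℝ^{d×r}` with
`‖VᵀV − VᵀRRᵀV‖₂ = ‖I_ℓ − VᵀRRᵀV‖₂ ≤ 3√(ℓ/r)`. -/
theorem bss_spectral_error_bound
    (ℓ r d : ℕ) (hℓ : 0 < ℓ) (hr : 0 < r) (hd : 0 < d) (hrℓ : ℓ < r)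
    (V : Matrix (Fin d) (Fin ℓ) ℝ) (hV : Vᵀ * V = 1) :
    ∃ R : Matrix (Fin d) (Fin r) ℝ, IsSamplingRescaling R ∧
      specNorm (Vᵀ * V - Vᵀ * R * Rᵀ * V) = specNorm (1 - Vᵀ * R * Rᵀ * V) ∧
      specNorm (1 - Vᵀ * R * Rᵀ * V) ≤ 3 * Real.sqrt ((ℓ : ℝ) / r) := by
  have hℓ' : (0 : ℝ) < ℓ := by exact_mod_cast hℓ
  have hr' : (0 : ℝ) < r := by exact_mod_cast hr
  have hlt : (ℓ : ℝ) < r := by exact_mod_cast hrℓ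
  set e := Real.sqrt ((ℓ : ℝ) / r) with he_def
  have he : 0 < e := Real.sqrt_pos.mpr (by positivity)
  have hesq : e ^ 2 = ℓ / r := Real.sq_sqrt (by positivity)
  have hℓe : (ℓ : ℝ) = r * e ^ 2 := by rw [hesq]; field_simp
  have he1 : e < 1 := by
    rw [he_def, Real.sqrt_lt' one_pos, one_pow, div_lt_one hr']; exact hlt
  have h1e : 0 < 1 - e := by linarith
  have hδ : 0 < (1 + e) / (1 - e) := by positivity
  have hεU : 0 < e * (1 - e) / (1 + e) := by positivity
  have hpar : ((1 + e) / (1 - e))⁻¹ + e * (1 - e) / (1 + e) ≤ 1 - e := by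
    apply le_of_eq; field_simp
  obtain ⟨idx, s, hs, ⟨hup, -⟩, ⟨hlo, -⟩⟩ := iterate_steps hℓ hV he he1 hδ hεU hpar r
  set A := ∑ t, s t • vecMulVec (V (idx t)) (V (idx t)) with hA
  set c := (1 - e) / r with hc
  have hc0 : 0 < c := by positivity
  set w : Fin r → ℝ := fun t => Real.sqrt (c * s t) with hw
  set R : Matrix (Fin d) (Fin r) ℝ := fun i t => w t * (if i = idx t then 1 else 0) with hR
  have hVR : ∀ k t, (Vᵀ * R) k t = w t * V (idx t) k := by
    intro k t
    rw [Matrix.mul_apply]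
    simp [hR, mul_comm]
  have hRV : Vᵀ * R * Rᵀ * V = c • A := by
    have : Vᵀ * R * Rᵀ * V = (Vᵀ * R) * (Vᵀ * R)ᵀ := by
      rw [transpose_mul, transpose_transpose, ← Matrix.mul_assoc]
    rw [this]
    ext j k
    rw [Matrix.mul_apply, hA, Matrix.smul_apply, Matrix.sum_apply, smul_eq_mul, Finset.mul_sum]
    refine Finset.sum_congr rfl fun t _ => ?_
    rw [transpose_apply, hVR, hVR, Matrix.smul_apply, vecMulVec_apply, smul_eq_mul]
    have : w t * w t = c * s t := Real.mul_self_sqrt (mul_pos hc0 (hs t)).le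
    linear_combination (V (idx t) j * V (idx t) k) * this
  have hsym : Aᵀ = A := by
    rw [hA, transpose_sum]
    refine Finset.sum_congr rfl fun t _ => ?_
    rw [transpose_smul, transpose_vecMulVec]
  refine ⟨R, ⟨idx, w, fun t => Real.sqrt_pos.mpr (mul_pos hc0 (hs t)), fun t i => rfl⟩,
    by rw [hV], ?_⟩
  rw [hRV]
  apply spec_bound
  · rw [transpose_sub, transpose_smul, hsym, transpose_one]
  · positivity
  · intro x
    rcases eq_or_ne x 0 with rfl | hx
    · simp
    have h1 := hup x hx
    have h2 := hlo x hx
    have hxx : 0 ≤ x ⬝ᵥ x := Finset.sum_nonneg fun i _ => mul_self_nonneg _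
    simp only [sub_mulVec, smul_mulVec, one_mulVec, dotProduct_sub, dotProduct_smul,
      smul_eq_mul] at h1 h2 ⊢
    have e1 : c * ((ℓ : ℝ) / (e * (1 - e) / (1 + e)) + r * ((1 + e) / (1 - e))) = (1 + e) ^ 2 := by
      rw [hc, hℓe]; field_simp; ring
    have e2 : c * (-((ℓ : ℝ) / e) + r) = (1 - e) ^ 2 := by
      rw [hc, hℓe]; field_simp; ring
    have h1' := mul_pos hc0 h1
    have h2' := mul_pos hc0 h2
    rw [mul_sub, ← mul_assoc, e1] at h1'
    rw [mul_sub, ← mul_assoc c _ (x ⬝ᵥ x), e2] at h2'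
    rw [abs_le]
    constructor <;> nlinarith [mul_nonneg he.le hxx, mul_nonneg (mul_pos he h1e).le hxx]
end

section
/- There is an absolute constant c > 0 with the following property. Let ε ∈ (0, 1/2], δ ∈ (0, 1), and let V ∈ ℝ^{d×ℓ} satisfy V^T V = I_ℓ. Define leverage-score probabilities p_i = ‖v_i‖₂²/ℓ for i = 1,…,d, where v_i is the i-th row of V (so Σ_i p_i = 1). Let r be an integer with r ≥ c · (ℓ/ε²) · log(ℓ/(ε²√δ)), draw indices j_1,…,j_r independently and identically distributed according to (p_1,…,p_d), and let R ∈ ℝ^{d×r} be the random matrix whose t-th column equals (1/√(r · p_{j_t})) · e_{j_t}. Then with probability at least 1 − δ, ‖V^T V − V^T R R^T V‖₂ = ‖I_ℓ − V^T R R^T V‖₂ ≤ ε. -/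
open Matrix

/-- The leverage-score probabilities `p_i = ‖v_i‖₂²/ℓ`, where `v_i` is the
`i`-th row of `V ∈ ℝ^{d×ℓ}`. -/
noncomputable def lvgProb {d ℓ : ℕ} (V : Matrix (Fin d) (Fin ℓ) ℝ) (i : Fin d) : ℝ :=
  (∑ k, V i k ^ 2) / ℓ

/-- The sampling-and-rescaling matrix `R ∈ ℝ^{d×r}` determined by the drawn
indices `j_1,…,j_r`: the `t`-th column is `(1/√(r·p_{j_t}))·e_{j_t}`. -/
noncomputable def lvgMatrix {d ℓ : ℕ} (V : Matrix (Fin d) (Fin ℓ) ℝ) (r : ℕ)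
    (j : Fin r → Fin d) : Matrix (Fin d) (Fin r) ℝ :=
  Matrix.of fun i t => if i = j t then 1 / Real.sqrt (r * lvgProb V (j t)) else 0

theorem lv_spec {l : ℕ} (T : Matrix (Fin l) (Fin l) ℝ) (hT : T.IsHermitian) :
    ∃ (lam : Fin l → ℝ) (U : Matrix (Fin l) (Fin l) ℝ), Uᵀ * U = 1 ∧ U * Uᵀ = 1 ∧
      ∀ k : ℕ, T ^ k = U * diagonal (fun i => lam i ^ k) * Uᵀ := by
  have h := hT.spectral_theorem
  have h1 : (hT.eigenvectorUnitary : Matrix (Fin l) (Fin l) ℝ)ᵀ * hT.eigenvectorUnitary = 1 := by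
    have := Unitary.coe_star_mul_self hT.eigenvectorUnitary
    rwa [star_eq_conjTranspose, conjTranspose_eq_transpose_of_trivial] at this
  have h2 : (hT.eigenvectorUnitary : Matrix (Fin l) (Fin l) ℝ) *
      (hT.eigenvectorUnitary : Matrix (Fin l) (Fin l) ℝ)ᵀ = 1 := by
    have := Unitary.coe_mul_star_self hT.eigenvectorUnitary
    rwa [Unitary.coe_star, star_eq_conjTranspose, conjTranspose_eq_transpose_of_trivial] at this
  refine ⟨hT.eigenvalues, hT.eigenvectorUnitary, h1, h2, ?_⟩
  have h3 : T = (hT.eigenvectorUnitary : Matrix (Fin l) (Fin l) ℝ) *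
      diagonal hT.eigenvalues * (hT.eigenvectorUnitary : Matrix (Fin l) (Fin l) ℝ)ᵀ := by
    conv_lhs => rw [h]
    rw [Unitary.conjStarAlgAut_apply]
    rw [star_eq_conjTranspose, conjTranspose_eq_transpose_of_trivial]
    rfl
  generalize (hT.eigenvectorUnitary : Matrix (Fin l) (Fin l) ℝ) = U at *
  generalize hT.eigenvalues = lam at *
  intro k
  induction k with
  | zero => simp [h2]
  | succ k ih =>
    rw [pow_succ, ih]
    rw [show U * diagonal (fun i => lam i ^ k) * Uᵀ * T =
      U * diagonal (fun i => lam i ^ k) * Uᵀ * (U * diagonal lam * Uᵀ) from congrArg _ h3]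
    calc U * diagonal (fun i => lam i ^ k) * Uᵀ * (U * diagonal lam * Uᵀ)
        = U * (diagonal (fun i => lam i ^ k) * (Uᵀ * U) * diagonal lam) * Uᵀ := by
          simp only [Matrix.mul_assoc]
      _ = _ := by rw [h1, Matrix.mul_one, diagonal_mul_diagonal]; simp only [pow_succ]

theorem lv_spec' {l : ℕ} (T : Matrix (Fin l) (Fin l) ℝ) (hT : T.IsHermitian) :
    ∃ (lam : Fin l → ℝ) (c : (Fin l → ℝ) → Fin l → ℝ), (∀ x i, 0 ≤ c x i) ∧
      (∀ k x, x ⬝ᵥ (T ^ k *ᵥ x) = ∑ i, lam i ^ k * c x i) ∧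
      (∀ k, trace (T ^ k) = ∑ i, lam i ^ k) ∧
      (∀ x, x ⬝ᵥ x = ∑ i, c x i) ∧
      (∀ x, x ⬝ᵥ (T *ᵥ x) = ∑ i, lam i * c x i) ∧
      ∀ i, ∃ x, x ⬝ᵥ x = 1 ∧ x ⬝ᵥ (T *ᵥ x) = lam i := by
  obtain ⟨lam, U, h1, h2, h⟩ := lv_spec T hT
  have hq : ∀ k x, x ⬝ᵥ (T ^ k *ᵥ x) = ∑ i, lam i ^ k * ((Uᵀ *ᵥ x) i) ^ 2 := by
    intro k x
    rw [h, ← mulVec_mulVec, ← mulVec_mulVec, dotProduct_mulVec, ← mulVec_transpose]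
    simp only [dotProduct, mulVec_diagonal]
    exact Finset.sum_congr rfl fun i _ => by ring
  have hq0 : ∀ x, x ⬝ᵥ x = ∑ i, ((Uᵀ *ᵥ x) i) ^ 2 := by
    intro x; simpa using hq 0 x
  have hq1 : ∀ x, x ⬝ᵥ (T *ᵥ x) = ∑ i, lam i * ((Uᵀ *ᵥ x) i) ^ 2 := by
    intro x; simpa using hq 1 x
  refine ⟨lam, fun x i => ((Uᵀ *ᵥ x) i) ^ 2, fun _ _ => sq_nonneg _, hq, ?_, hq0, hq1, ?_⟩
  · intro k
    rw [h, trace_mul_comm, ← Matrix.mul_assoc, h1, Matrix.one_mul, trace_diagonal]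
  · intro i
    refine ⟨U *ᵥ Pi.single i 1, ?_, ?_⟩
    · rw [hq0, mulVec_mulVec, h1, one_mulVec]
      simp [Pi.single_apply]
    · rw [hq1, mulVec_mulVec, h1, one_mulVec]
      simp [Pi.single_apply]

/-- Consequences for `T ⪰ a > 0`. -/
theorem lv_moments {l : ℕ} (T : Matrix (Fin l) (Fin l) ℝ) (hT : T.IsHermitian) (a : ℝ) (ha : 0 ≤ a)
    (h : ∀ x, a * (x ⬝ᵥ x) ≤ x ⬝ᵥ (T *ᵥ x)) (x : Fin l → ℝ) :
    (∀ k, 0 ≤ x ⬝ᵥ (T ^ k *ᵥ x)) ∧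
    (∀ i j, (x ⬝ᵥ (T ^ i *ᵥ x)) * (x ⬝ᵥ (T ^ j *ᵥ x)) ≤ (x ⬝ᵥ x) * (x ⬝ᵥ (T ^ (i + j) *ᵥ x))) ∧
    (∀ k, a * (x ⬝ᵥ (T ^ k *ᵥ x)) ≤ x ⬝ᵥ (T ^ (k + 1) *ᵥ x)) := by
  obtain ⟨lam, c, hc, hq, htr, hq0, hq1, hl⟩ := lv_spec' T hT
  have hla : ∀ i, a ≤ lam i := by
    intro i
    obtain ⟨y, hy, hy2⟩ := hl i
    have := h y
    rw [hy, hy2] at this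
    linarith
  have hl0 : ∀ i, 0 ≤ lam i := fun i => ha.trans (hla i)
  refine ⟨?_, ?_, ?_⟩
  · intro k
    rw [hq]
    exact Finset.sum_nonneg fun i _ => mul_nonneg (pow_nonneg (hl0 i) _) (hc x i)
  · intro i j
    rw [hq, hq, hq, hq0]
    have key : 0 ≤ ∑ p, ∑ q, c x p * c x q * ((lam p ^ i - lam q ^ i) * (lam p ^ j - lam q ^ j)) := by
      refine Finset.sum_nonneg fun p _ => Finset.sum_nonneg fun q _ => ?_
      refine mul_nonneg (mul_nonneg (hc x p) (hc x q)) ?_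
      rcases le_total (lam p) (lam q) with hpq | hpq
      · exact mul_nonneg_of_nonpos_of_nonpos
          (sub_nonpos.2 (pow_le_pow_left₀ (hl0 p) hpq i)) (sub_nonpos.2 (pow_le_pow_left₀ (hl0 p) hpq j))
      · exact mul_nonneg
          (sub_nonneg.2 (pow_le_pow_left₀ (hl0 q) hpq i)) (sub_nonneg.2 (pow_le_pow_left₀ (hl0 q) hpq j))
    have e : ∑ p, ∑ q, c x p * c x q * ((lam p ^ i - lam q ^ i) * (lam p ^ j - lam q ^ j))
       = (∑ p, c x p) * (∑ p, lam p ^ (i + j) * c x p) + (∑ p, lam p ^ (i + j) * c x p) * (∑ p, c x p)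
        - (∑ p, lam p ^ i * c x p) * (∑ p, lam p ^ j * c x p)
        - (∑ p, lam p ^ j * c x p) * (∑ p, lam p ^ i * c x p) := by
      simp only [Finset.sum_mul_sum, ← Finset.sum_add_distrib, ← Finset.sum_sub_distrib]
      refine Finset.sum_congr rfl fun p _ => Finset.sum_congr rfl fun q _ => ?_
      ring
    rw [e] at key
    linarith [mul_comm (∑ p, c x p) (∑ p, lam p ^ (i + j) * c x p),
      mul_comm (∑ p, lam p ^ i * c x p) (∑ p, lam p ^ j * c x p)]
  · intro k
    rw [hq, hq, Finset.mul_sum]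
    refine Finset.sum_le_sum fun i _ => ?_
    rw [pow_succ]
    have := mul_le_mul_of_nonneg_right (hla i) (mul_nonneg (pow_nonneg (hl0 i) k) (hc x i))
    linarith

theorem lv_trace_lower {l : ℕ} (T : Matrix (Fin l) (Fin l) ℝ) (hT : T.IsHermitian)
    (a b : ℝ) (ha : 0 ≤ a)
    (h : ∀ x, a * (x ⬝ᵥ x) ≤ x ⬝ᵥ (T *ᵥ x)) (h' : ∀ x, x ⬝ᵥ (T *ᵥ x) ≤ b * (x ⬝ᵥ x)) (k : ℕ) :
    a * trace (T ^ k) ≤ trace (T ^ (k + 1)) ∧ trace (T ^ (k + 1)) ≤ b * trace (T ^ k) := by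
  obtain ⟨lam, c, hc, hq, htr, hq0, hq1, hl⟩ := lv_spec' T hT
  have hla : ∀ i, a ≤ lam i ∧ lam i ≤ b := by
    intro i
    obtain ⟨y, hy, hy2⟩ := hl i
    have h1 := h y
    have h2 := h' y
    rw [hy, hy2] at h1 h2
    constructor <;> linarith
  have hl0 : ∀ i, 0 ≤ lam i := fun i => ha.trans (hla i).1
  rw [htr, htr, Finset.mul_sum, Finset.mul_sum]
  constructor
  · refine Finset.sum_le_sum fun i _ => ?_
    rw [pow_succ']
    exact mul_le_mul_of_nonneg_right (hla i).1 (pow_nonneg (hl0 i) k)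
  · refine Finset.sum_le_sum fun i _ => ?_
    rw [pow_succ']
    exact mul_le_mul_of_nonneg_right (hla i).2 (pow_nonneg (hl0 i) k)

theorem lv_trace_step_ge {l : ℕ} (T : Matrix (Fin l) (Fin l) ℝ) (hT : T.IsHermitian)
    (a : ℝ) (ha : 0 ≤ a)
    (h : ∀ x, a * (x ⬝ᵥ x) ≤ x ⬝ᵥ (T *ᵥ x)) (k : ℕ) :
    a * trace (T ^ k) ≤ trace (T ^ (k + 1)) ∧ 0 ≤ trace (T ^ k) := by
  obtain ⟨lam, c, hc, hq, htr, hq0, hq1, hl⟩ := lv_spec' T hT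
  have hla : ∀ i, a ≤ lam i := by
    intro i
    obtain ⟨y, hy, hy2⟩ := hl i
    have h1 := h y
    rw [hy, hy2] at h1
    linarith
  have hl0 : ∀ i, 0 ≤ lam i := fun i => ha.trans (hla i)
  rw [htr, htr, Finset.mul_sum]
  refine ⟨Finset.sum_le_sum fun i _ => ?_, Finset.sum_nonneg fun i _ => pow_nonneg (hl0 i) k⟩
  rw [pow_succ']
  exact mul_le_mul_of_nonneg_right (hla i) (pow_nonneg (hl0 i) k)

theorem lv_trace_ge {l : ℕ} (T : Matrix (Fin l) (Fin l) ℝ) (hT : T.IsHermitian)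
    (h : ∀ x, 0 ≤ x ⬝ᵥ (T *ᵥ x)) (x : Fin l → ℝ) (hx : x ⬝ᵥ x = 1) (s : ℝ) (hs : 0 ≤ s)
    (hsx : s ≤ x ⬝ᵥ (T *ᵥ x)) (k : ℕ) : s ^ k ≤ trace (T ^ k) := by
  obtain ⟨lam, c, hc, hq, htr, hq0, hq1, hl⟩ := lv_spec' T hT
  have hl0 : ∀ i, 0 ≤ lam i := by
    intro i
    obtain ⟨y, hy, hy2⟩ := hl i
    rw [← hy2]; exact h y
  have : ∃ i, s ≤ lam i := by
    by_contra hcon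
    push Not at hcon
    rw [hq0] at hx
    rw [hq1] at hsx
    have hne : ∃ i ∈ (Finset.univ : Finset (Fin l)), 0 < c x i := by
      apply Finset.exists_lt_of_sum_lt (f := fun _ => (0:ℝ))
      rw [hx]; simp
    have : ∑ i, lam i * c x i < ∑ i, s * c x i := by
      obtain ⟨i, hi, hi0⟩ := hne
      exact Finset.sum_lt_sum (fun j _ => mul_le_mul_of_nonneg_right (hcon j).le (hc x j))
        ⟨i, hi, mul_lt_mul_of_pos_right (hcon i) hi0⟩
    rw [← Finset.mul_sum, hx] at this
    linarith
  obtain ⟨i, hi⟩ := this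
  rw [htr]
  exact (pow_le_pow_left₀ hs hi k).trans
    (Finset.single_le_sum (f := fun i => lam i ^ k) (fun j _ => pow_nonneg (hl0 j) k) (Finset.mem_univ i))

theorem lv_specNorm {l : ℕ} (T : Matrix (Fin l) (Fin l) ℝ) (hT : T.IsHermitian) (e : ℝ) (he : 0 ≤ e)
    (h : ∀ x, x ⬝ᵥ x = 1 → |x ⬝ᵥ (T *ᵥ x)| ≤ e) : specNorm T ≤ e := by
  obtain ⟨lam, c, hc, hq, htr, hq0, hq1, hl⟩ := lv_spec' T hT
  have hl0 : ∀ i, lam i ^ 2 ≤ e ^ 2 := by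
    intro i
    obtain ⟨y, hy, hy2⟩ := hl i
    rw [← hy2]; exact sq_le_sq' (abs_le.1 (h y hy)).1 (abs_le.1 (h y hy)).2
  unfold specNorm
  apply Real.sSup_le _ he
  rintro _ ⟨x, hx, rfl⟩
  unfold euclNorm at *
  rw [Real.sqrt_eq_one] at hx
  have e1 : ∑ i, (T *ᵥ x) i ^ 2 = x ⬝ᵥ (T ^ 2 *ᵥ x) := by
    rw [pow_two, ← mulVec_mulVec, dotProduct_mulVec, ← mulVec_transpose,
      ← conjTranspose_eq_transpose_of_trivial, hT.eq]
    simp [dotProduct, pow_two]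
  have e2 : x ⬝ᵥ x = 1 := by rw [← hx]; simp [dotProduct, pow_two]
  rw [e1, hq]
  rw [hq0] at e2
  apply Real.sqrt_le_iff.2 ⟨he, ?_⟩
  calc ∑ i, lam i ^ 2 * c x i ≤ ∑ i, e ^ 2 * c x i :=
        Finset.sum_le_sum fun i _ => mul_le_mul_of_nonneg_right (hl0 i) (hc x i)
    _ = e ^ 2 := by rw [← Finset.mul_sum, e2, mul_one]

/-- The rank-one comparison. -/
theorem lv_rank_one {l : ℕ} (T : Matrix (Fin l) (Fin l) ℝ) (hT : T.IsHermitian) (a : ℝ) (ha : 0 < a)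
    (h : ∀ x, a * (x ⬝ᵥ x) ≤ x ⬝ᵥ (T *ᵥ x)) (u : Fin l → ℝ) (K : ℝ) (hK : u ⬝ᵥ u ≤ a * K) (n : ℕ) :
    let B := T + vecMulVec u u
    (u ⬝ᵥ (B ^ n *ᵥ u) ≤ (1 + K) ^ n * (u ⬝ᵥ (T ^ n *ᵥ u))) ∧
    (trace (B ^ (n + 1)) - trace (T ^ (n + 1)) ≤ (n + 1) * (u ⬝ᵥ (B ^ n *ᵥ u))) ∧
    ((n + 1) * (u ⬝ᵥ (T ^ n *ᵥ u)) ≤ trace (B ^ (n + 1)) - trace (T ^ (n + 1))) := by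
  intro B
  obtain ⟨t0, tt, ta⟩ := lv_moments T hT a ha.le h u
  have huu : 0 ≤ u ⬝ᵥ u := by simpa using t0 0
  have hK0 : 0 ≤ K := by
    by_contra hh
    push Not at hh
    have := mul_neg_of_pos_of_neg ha hh
    linarith
  have hm : ∀ k i, u ⬝ᵥ ((T ^ k * B ^ (i + 1)) *ᵥ u) =
      u ⬝ᵥ ((T ^ (k + 1) * B ^ i) *ᵥ u) + (u ⬝ᵥ (T ^ k *ᵥ u)) * (u ⬝ᵥ (B ^ i *ᵥ u)) := by
    intro k i
    have : T ^ k * B ^ (i + 1) = T ^ (k + 1) * B ^ i + T ^ k * vecMulVec u u * B ^ i := by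
      rw [pow_succ' B, pow_succ T]
      simp only [B]
      noncomm_ring
    rw [this, add_mulVec, dotProduct_add, ← mulVec_mulVec _ (T ^ k * _), ← mulVec_mulVec _ (T ^ k), vecMulVec_mulVec]
    simp [mulVec_smul, mul_comm]
  have b0 : ∀ i k, 0 ≤ u ⬝ᵥ ((T ^ k * B ^ i) *ᵥ u) := by
    intro i
    induction i with
    | zero => intro k; simpa using t0 k
    | succ i ih =>
      intro k
      rw [hm]
      have := ih 0
      simp only [pow_zero, one_mul] at this
      exact add_nonneg (ih _) (mul_nonneg (t0 k) this)
  have b0' : ∀ i, 0 ≤ u ⬝ᵥ (B ^ i *ᵥ u) := fun i => by simpa using b0 i 0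
  have mono : ∀ k i, u ⬝ᵥ ((T ^ (k + 1) * B ^ i) *ᵥ u) ≤ u ⬝ᵥ ((T ^ k * B ^ (i + 1)) *ᵥ u) := by
    intro k i
    rw [hm]
    linarith [mul_nonneg (t0 k) (b0' i)]
  have up : ∀ k i, u ⬝ᵥ ((T ^ k * B ^ i) *ᵥ u) ≤ u ⬝ᵥ (B ^ (k + i) *ᵥ u) := by
    intro k
    induction k with
    | zero => intro i; simp
    | succ k ih =>
      intro i
      refine (mono k i).trans ((ih (i + 1)).trans (le_of_eq ?_))
      rw [show k + (i + 1) = k + 1 + i by ring]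
  have lo : ∀ i k, u ⬝ᵥ (T ^ (k + i) *ᵥ u) ≤ u ⬝ᵥ ((T ^ k * B ^ i) *ᵥ u) := by
    intro i
    induction i with
    | zero => intro i; simp
    | succ i ih =>
      intro k
      refine le_trans (le_of_eq ?_) ((ih (k + 1)).trans (mono k i))
      rw [show k + (i + 1) = k + 1 + i by ring]
  have tel : ∀ m, trace (B ^ m) - trace (T ^ m) =
      ∑ i ∈ Finset.range m, u ⬝ᵥ ((T ^ (m - 1 - i) * B ^ i) *ᵥ u) := by
    intro m
    have key : ∀ i, i ≤ m → trace (T ^ (m - i) * B ^ i) - trace (T ^ m) =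
        ∑ i ∈ Finset.range i, u ⬝ᵥ ((T ^ (m - 1 - i) * B ^ i) *ᵥ u) := by
      intro i
      induction i with
      | zero => intro _; simp
      | succ i ih =>
        intro hi
        rw [Finset.sum_range_succ, ← ih (by omega)]
        have e1 : m - (i + 1) = m - 1 - i := by omega
        have e2 : m - i = (m - 1 - i) + 1 := by omega
        rw [e1, e2]
        generalize m - 1 - i = k
        have : T ^ k * B ^ (i + 1) = T ^ (k + 1) * B ^ i + T ^ k * vecMulVec u u * B ^ i := by
          rw [pow_succ' B, pow_succ T]
          simp only [B]
          noncomm_ring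
        have tr : trace (T ^ k * vecMulVec u u * B ^ i) = u ⬝ᵥ ((T ^ k * B ^ i) *ᵥ u) := by
          rw [trace_mul_comm, ← Matrix.mul_assoc, mul_vecMulVec, trace_vecMulVec,
            dotProduct_comm]
          have hTt : (T ^ k)ᵀ = T ^ k := by
            rw [transpose_pow, ← conjTranspose_eq_transpose_of_trivial, hT.eq]
          have hBt : (B ^ i)ᵀ = B ^ i := by
            rw [transpose_pow, ← conjTranspose_eq_transpose_of_trivial]
            simp only [B]
            rw [conjTranspose_add, hT.eq, conjTranspose_eq_transpose_of_trivial, transpose_vecMulVec]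
          conv_rhs => rw [dotProduct_mulVec, ← mulVec_transpose, transpose_mul, hTt, hBt, dotProduct_comm]
        rw [this, trace_add, tr]; ring
    have := key m le_rfl
    simpa using this
  refine ⟨?_, ?_, ?_⟩
  · have hb : ∀ m, u ⬝ᵥ (B ^ m *ᵥ u) = u ⬝ᵥ (T ^ m *ᵥ u) +
        ∑ i ∈ Finset.range m, (u ⬝ᵥ (T ^ (m - 1 - i) *ᵥ u)) * (u ⬝ᵥ (B ^ i *ᵥ u)) := by
      intro m
      have key : ∀ i, i ≤ m → u ⬝ᵥ ((T ^ (m - i) * B ^ i) *ᵥ u) = u ⬝ᵥ (T ^ m *ᵥ u) +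
          ∑ i ∈ Finset.range i, (u ⬝ᵥ (T ^ (m - 1 - i) *ᵥ u)) * (u ⬝ᵥ (B ^ i *ᵥ u)) := by
        intro i
        induction i with
        | zero => intro _; simp
        | succ i ih =>
          intro hi
          rw [Finset.sum_range_succ, ← add_assoc, ← ih (by omega)]
          have e1 : m - (i + 1) = m - 1 - i := by omega
          have e2 : m - i = (m - 1 - i) + 1 := by omega
          rw [e1, e2, hm]
      have := key m le_rfl
      simpa using this
    induction n using Nat.strong_induction_on with
    | _ m ih =>
      rw [hb]
      have bd : ∀ i ∈ Finset.range m, (u ⬝ᵥ (T ^ (m - 1 - i) *ᵥ u)) * (u ⬝ᵥ (B ^ i *ᵥ u)) ≤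
          K * (1 + K) ^ i * (u ⬝ᵥ (T ^ m *ᵥ u)) := by
        intro i hi
        have hi := Finset.mem_range.1 hi
        have h1 := mul_le_mul_of_nonneg_left (ih i hi) (t0 (m - 1 - i))
        have h2 := tt (m - 1 - i) i
        have h3 := ta (m - 1 - i + i)
        rw [show m - 1 - i + i = m - 1 by omega] at h2 h3
        rw [show m - 1 + 1 = m by omega] at h3
        have h4 : (u ⬝ᵥ u) * (u ⬝ᵥ (T ^ (m - 1) *ᵥ u)) ≤ K * (u ⬝ᵥ (T ^ m *ᵥ u)) := by
          have := mul_le_mul_of_nonneg_right hK (t0 (m - 1))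
          have := mul_le_mul_of_nonneg_left h3 hK0
          linarith
        have h5 := mul_le_mul_of_nonneg_left (h2.trans h4) (pow_nonneg (by linarith : 0 ≤ 1 + K) i)
        linarith
      have geo : ∀ m : ℕ, 1 + ∑ i ∈ Finset.range m, K * (1 + K) ^ i = (1 + K) ^ m := by
        intro m
        induction m with
        | zero => simp
        | succ m ih => rw [Finset.sum_range_succ, ← add_assoc, ih, pow_succ]; ring
      have := Finset.sum_le_sum bd
      rw [← Finset.sum_mul] at this
      rw [← geo m]
      linarith
  · rw [tel]
    have : ∀ i ∈ Finset.range (n + 1), u ⬝ᵥ ((T ^ (n + 1 - 1 - i) * B ^ i) *ᵥ u) ≤ u ⬝ᵥ (B ^ n *ᵥ u) := by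
      intro i hi
      have hi := Finset.mem_range.1 hi
      have := up (n + 1 - 1 - i) i
      rwa [show n + 1 - 1 - i + i = n by omega] at this
    have := Finset.sum_le_sum this
    simpa using this
  · rw [tel]
    have : ∀ i ∈ Finset.range (n + 1), u ⬝ᵥ (T ^ n *ᵥ u) ≤ u ⬝ᵥ ((T ^ (n + 1 - 1 - i) * B ^ i) *ᵥ u) := by
      intro i hi
      have hi := Finset.mem_range.1 hi
      have := lo i (n + 1 - 1 - i)
      rwa [show n + 1 - 1 - i + i = n by omega] at this
    have := Finset.sum_le_sum this
    simpa using this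

/-- Expectation induction. -/
theorem lv_expect {d : ℕ} {M : Type} [AddCommMonoid M] (p : Fin d → ℝ) (hp : ∀ i, 0 ≤ p i)
    (F : M → ℝ) (D : Fin d → M) (Q : ℕ → M → Prop) (C : ℝ) (hC : 0 ≤ C)
    (hQ : ∀ m T, Q (m + 1) T → ∀ i, Q m (T + D i))
    (hF : ∀ m T, Q (m + 1) T → ∑ i, p i * F (T + D i) ≤ C * F T) (r : ℕ) :
    ∀ T, Q r T → ∑ j : Fin r → Fin d, (∏ t, p (j t)) * F (T + ∑ t, D (j t)) ≤ C ^ r * F T := by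
  induction r with
  | zero => intro T _; simp
  | succ r ih =>
    intro T hT
    rw [← (Fin.consEquiv (fun _ => Fin d)).sum_comp, Fintype.sum_prod_type]
    simp only [Fin.consEquiv_apply, Fin.prod_univ_succ, Fin.sum_univ_succ, Fin.cons_zero, Fin.cons_succ]
    calc _ = ∑ i, p i * ∑ j : Fin r → Fin d, (∏ t, p (j t)) * F ((T + D i) + ∑ t, D (j t)) := by
          refine Finset.sum_congr rfl fun i _ => ?_
          rw [Finset.mul_sum]
          refine Finset.sum_congr rfl fun j _ => ?_
          rw [mul_assoc, add_assoc]
      _ ≤ ∑ i, p i * (C ^ r * F (T + D i)) :=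
          Finset.sum_le_sum fun i _ => mul_le_mul_of_nonneg_left (ih _ (hQ _ _ hT i)) (hp i)
      _ = C ^ r * ∑ i, p i * F (T + D i) := by
          rw [Finset.mul_sum]; exact Finset.sum_congr rfl fun i _ => by ring
      _ ≤ C ^ r * (C * F T) := mul_le_mul_of_nonneg_left (hF _ _ hT) (pow_nonneg hC r)
      _ = _ := by ring

theorem lv_quad {l : ℕ} (u x : Fin l → ℝ) : x ⬝ᵥ (vecMulVec u u *ᵥ x) = (u ⬝ᵥ x) ^ 2 := by
  rw [vecMulVec_mulVec]
  simp [dotProduct_comm x u, pow_two]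

theorem lv_cs {l : ℕ} (u x : Fin l → ℝ) : (u ⬝ᵥ x) ^ 2 ≤ (u ⬝ᵥ u) * (x ⬝ᵥ x) := by
  have := Finset.sum_mul_sq_le_sq_mul_sq Finset.univ u x
  simpa [dotProduct, pow_two] using this

theorem lv_herm {l : ℕ} (u : Fin l → ℝ) (s : ℝ) : (s • vecMulVec u u).IsHermitian := by
  unfold IsHermitian
  rw [conjTranspose_eq_transpose_of_trivial, transpose_smul, transpose_vecMulVec]

theorem lv_smul {l : ℕ} (u : Fin l → ℝ) (s : ℝ) (hs : 0 ≤ s) :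
    s • vecMulVec u u = vecMulVec (√s • u) (√s • u) := by
  rw [smul_vecMulVec, vecMulVec_smul, smul_smul, Real.mul_self_sqrt hs]

theorem lv_smul_quad {l : ℕ} (u : Fin l → ℝ) (s : ℝ) (hs : 0 ≤ s) (M : Matrix (Fin l) (Fin l) ℝ) :
    (√s • u) ⬝ᵥ (M *ᵥ (√s • u)) = s * (u ⬝ᵥ (M *ᵥ u)) := by
  rw [mulVec_smul, smul_dotProduct, dotProduct_smul, smul_smul, Real.mul_self_sqrt hs, smul_eq_mul]

theorem lv_smul_norm {l : ℕ} (u : Fin l → ℝ) (s : ℝ) (hs : 0 ≤ s) :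
    (√s • u) ⬝ᵥ (√s • u) = s * (u ⬝ᵥ u) := by
  simpa using lv_smul_quad u s hs 1

theorem lv_pow_exp (K : ℝ) (hK : 0 ≤ K) (n : ℕ) : (1 + K / (n + 1 : ℕ)) ^ n ≤ Real.exp K := by
  have h1 : 1 + K / (n + 1 : ℕ) ≤ Real.exp (K / (n + 1 : ℕ)) := by
    linarith [Real.add_one_le_exp (K / (n + 1 : ℕ))]
  have h0 : 0 ≤ K / (n + 1 : ℕ) := by positivity
  calc (1 + K / (n + 1 : ℕ)) ^ n ≤ (Real.exp (K / (n + 1 : ℕ))) ^ n :=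
        pow_le_pow_left₀ (by linarith) h1 n
    _ = Real.exp (n * (K / (n + 1 : ℕ))) := by rw [Real.exp_nat_mul]
    _ ≤ Real.exp K := by
      apply Real.exp_le_exp.2
      push_cast
      rw [mul_div_assoc', div_le_iff₀ (by positivity)]
      nlinarith

theorem lv_upper {d l : ℕ} (p : Fin d → ℝ) (hp : ∀ i, 0 ≤ p i) (hsum : ∑ i, p i = 1)
    (u : Fin d → Fin l → ℝ) (hu : ∀ i, u i ⬝ᵥ u i ≤ l)
    (hE : ∀ M : Matrix (Fin l) (Fin l) ℝ, ∑ i, p i * (u i ⬝ᵥ (M *ᵥ u i)) = trace M)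
    (th : ℝ) (hth : 0 ≤ th) (r n : ℕ) :
    ∑ j : Fin r → Fin d, (∏ t, p (j t)) *
      trace ((1 + ∑ t, (th / (n + 1 : ℕ)) • vecMulVec (u (j t)) (u (j t))) ^ (n + 1)) ≤
      Real.exp (th * Real.exp (th * l)) ^ r * l := by
  have he : 0 ≤ th / (n + 1 : ℕ) := by positivity
  have h := lv_expect p hp (fun T : Matrix (Fin l) (Fin l) ℝ => trace (T ^ (n + 1)))
    (fun i => (th / (n + 1 : ℕ)) • vecMulVec (u i) (u i))
    (fun _ T => T.IsHermitian ∧ ∀ x, 1 * (x ⬝ᵥ x) ≤ x ⬝ᵥ (T *ᵥ x))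
    (Real.exp (th * Real.exp (th * l))) (Real.exp_pos _).le ?_ ?_ r 1 ?_
  · simpa using h
  · rintro _ T ⟨hT, hT1⟩ i
    refine ⟨hT.add (lv_herm _ _), fun x => ?_⟩
    rw [add_mulVec, dotProduct_add, smul_mulVec, dotProduct_smul, lv_quad, smul_eq_mul]
    have := hT1 x
    have := mul_nonneg he (sq_nonneg (u i ⬝ᵥ x))
    linarith
  · rintro _ T ⟨hT, hT1⟩
    obtain ⟨g1, g0⟩ := lv_trace_step_ge T hT 1 zero_le_one hT1 n
    have hstep : ∀ i, trace ((T + (th / (n + 1 : ℕ)) • vecMulVec (u i) (u i)) ^ (n + 1)) ≤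
        trace (T ^ (n + 1)) + th * Real.exp (th * l) * (u i ⬝ᵥ (T ^ n *ᵥ u i)) := by
      intro i
      rw [lv_smul _ _ he]
      obtain ⟨a1, a2, _⟩ := lv_rank_one T hT 1 one_pos hT1 (√(th / (n + 1 : ℕ)) • u i)
        (th * l / (n + 1 : ℕ)) (by
          rw [lv_smul_norm _ _ he, one_mul, div_mul_eq_mul_div]
          have := hu i
          gcongr) n
      have a3 := (lv_moments T hT 1 zero_le_one hT1 (u i)).1 n
      have a4 := lv_pow_exp (th * l) (by positivity) n
      rw [lv_smul_quad _ _ he (T ^ n)] at a1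
      have a5 := a1.trans (mul_le_mul_of_nonneg_right a4 (mul_nonneg he a3))
      have a6 := mul_le_mul_of_nonneg_left a5 (by positivity : (0:ℝ) ≤ (n:ℝ) + 1)
      have a7 : ((n:ℝ) + 1) * (Real.exp (th * l) * (th / (n + 1 : ℕ) * (u i ⬝ᵥ (T ^ n *ᵥ u i)))) =
          th * Real.exp (th * l) * (u i ⬝ᵥ (T ^ n *ᵥ u i)) := by
        push_cast
        field_simp
      linarith
    calc _ ≤ ∑ i, p i * (trace (T ^ (n + 1)) + th * Real.exp (th * l) * (u i ⬝ᵥ (T ^ n *ᵥ u i))) :=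
          Finset.sum_le_sum fun i _ => mul_le_mul_of_nonneg_left (hstep i) (hp i)
      _ = trace (T ^ (n + 1)) + th * Real.exp (th * l) * trace (T ^ n) := by
          rw [← hE (T ^ n)]
          simp only [mul_add, Finset.sum_add_distrib, ← Finset.sum_mul, hsum, Finset.mul_sum, one_mul]
          congr 1
          exact Finset.sum_congr rfl fun i _ => by ring
      _ ≤ (1 + th * Real.exp (th * l)) * trace (T ^ (n + 1)) := by
          have : th * Real.exp (th * l) * trace (T ^ n) ≤ th * Real.exp (th * l) * trace (T ^ (n + 1)) := by
            apply mul_le_mul_of_nonneg_left _ (by positivity)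
            linarith
          linarith
      _ ≤ _ := by
          apply mul_le_mul_of_nonneg_right
          · linarith [Real.add_one_le_exp (th * Real.exp (th * l))]
          · linarith
  · exact ⟨isHermitian_one, fun x => by simp⟩

theorem lv_lower {d l : ℕ} (p : Fin d → ℝ) (hp : ∀ i, 0 ≤ p i) (hsum : ∑ i, p i = 1)
    (u : Fin d → Fin l → ℝ) (hu : ∀ i, u i ⬝ᵥ u i ≤ l)
    (hE : ∀ M : Matrix (Fin l) (Fin l) ℝ, ∑ i, p i * (u i ⬝ᵥ (M *ᵥ u i)) = trace M)
    (th : ℝ) (hth : 0 ≤ th) (r n : ℕ) (hn : r * (th * l / (n + 1 : ℕ)) ≤ 1 / 2) :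
    ∑ j : Fin r → Fin d, (∏ t, p (j t)) *
      trace ((1 + ∑ t, (-(th / (n + 1 : ℕ))) • vecMulVec (u (j t)) (u (j t))) ^ (n + 1)) ≤
      Real.exp (-(th * Real.exp (-(2 * th * l)))) ^ r * l := by
  have he : 0 ≤ th / (n + 1 : ℕ) := by positivity
  have hL : 0 ≤ th * l / (n + 1 : ℕ) := by positivity
  have hQ : ∀ (m : ℕ) (T : Matrix (Fin l) (Fin l) ℝ),
      (T.IsHermitian ∧ (∀ x, (1 / 2 + (m + 1 : ℕ) * (th * l / (n + 1 : ℕ))) * (x ⬝ᵥ x) ≤ x ⬝ᵥ (T *ᵥ x)) ∧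
      ∀ x, x ⬝ᵥ (T *ᵥ x) ≤ 1 * (x ⬝ᵥ x)) → ∀ i,
      ((T + (-(th / (n + 1 : ℕ))) • vecMulVec (u i) (u i)).IsHermitian ∧
      (∀ x, (1 / 2 + m * (th * l / (n + 1 : ℕ))) * (x ⬝ᵥ x) ≤
        x ⬝ᵥ ((T + (-(th / (n + 1 : ℕ))) • vecMulVec (u i) (u i)) *ᵥ x)) ∧
      ∀ x, x ⬝ᵥ ((T + (-(th / (n + 1 : ℕ))) • vecMulVec (u i) (u i)) *ᵥ x) ≤ 1 * (x ⬝ᵥ x)) := by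
    rintro m T ⟨hT, hT1, hT2⟩ i
    have hq : ∀ x, x ⬝ᵥ ((T + (-(th / (n + 1 : ℕ))) • vecMulVec (u i) (u i)) *ᵥ x) =
        x ⬝ᵥ (T *ᵥ x) - (th / (n + 1 : ℕ)) * (u i ⬝ᵥ x) ^ 2 := by
      intro x
      rw [add_mulVec, dotProduct_add, smul_mulVec, dotProduct_smul, lv_quad, smul_eq_mul]
      ring
    refine ⟨hT.add (lv_herm _ _), fun x => ?_, fun x => ?_⟩
    · rw [hq]
      have h1 := hT1 x
      have hxx : 0 ≤ x ⬝ᵥ x := by simpa using dotProduct_star_self_nonneg x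
      have h2 : (u i ⬝ᵥ x) ^ 2 ≤ l * (x ⬝ᵥ x) :=
        (lv_cs _ _).trans (mul_le_mul_of_nonneg_right (hu i) hxx)
      have h3 := mul_le_mul_of_nonneg_left h2 he
      have h4 : th / (n + 1 : ℕ) * (l * (x ⬝ᵥ x)) = th * l / (n + 1 : ℕ) * (x ⬝ᵥ x) := by ring
      rw [h4] at h3
      have h5 : (1 / 2 + ((m + 1 : ℕ) : ℝ) * (th * l / (n + 1 : ℕ))) * (x ⬝ᵥ x) =
        (1 / 2 + m * (th * l / (n + 1 : ℕ))) * (x ⬝ᵥ x) + th * l / (n + 1 : ℕ) * (x ⬝ᵥ x) := by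
        push_cast; ring
      linarith
    · rw [hq]
      have := hT2 x
      have := mul_nonneg he (sq_nonneg (u i ⬝ᵥ x))
      linarith
  have h := lv_expect p hp (fun T : Matrix (Fin l) (Fin l) ℝ => trace (T ^ (n + 1)))
    (fun i => (-(th / (n + 1 : ℕ))) • vecMulVec (u i) (u i))
    (fun m T => T.IsHermitian ∧ (∀ x, (1 / 2 + m * (th * l / (n + 1 : ℕ))) * (x ⬝ᵥ x) ≤ x ⬝ᵥ (T *ᵥ x)) ∧
      ∀ x, x ⬝ᵥ (T *ᵥ x) ≤ 1 * (x ⬝ᵥ x))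
    (Real.exp (-(th * Real.exp (-(2 * th * l))))) (Real.exp_pos _).le hQ ?_ r 1 ?_
  · simpa using h
  · rintro m T hQT
    have hQi := hQ m T hQT
    obtain ⟨hT, hT1, hT2⟩ := hQT
    have hhalf : ∀ (k : ℕ) (S : Matrix (Fin l) (Fin l) ℝ),
        (∀ x, (1 / 2 + k * (th * l / (n + 1 : ℕ))) * (x ⬝ᵥ x) ≤ x ⬝ᵥ (S *ᵥ x)) →
        ∀ x, (1 / 2) * (x ⬝ᵥ x) ≤ x ⬝ᵥ (S *ᵥ x) := by
      intro k S hS x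
      have hxx : 0 ≤ x ⬝ᵥ x := by simpa using dotProduct_star_self_nonneg x
      have h0 : 0 ≤ k * (th * l / (n + 1 : ℕ)) := by positivity
      have := hS x
      have := mul_nonneg h0 hxx
      linarith
    have g1 := (lv_trace_lower T hT (1 / 2) 1 (by norm_num) (hhalf _ T hT1) hT2 n).2
    have g0 := (lv_trace_step_ge T hT (1 / 2) (by norm_num) (hhalf _ T hT1) (n + 1)).2
    have hstep : ∀ i, trace ((T + (-(th / (n + 1 : ℕ))) • vecMulVec (u i) (u i)) ^ (n + 1)) ≤
        trace (T ^ (n + 1)) - th * Real.exp (-(2 * th * l)) * (u i ⬝ᵥ (T ^ n *ᵥ u i)) := by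
      intro i
      obtain ⟨k1, k2, -⟩ := hQi i
      have k2 := hhalf _ _ k2
      have eT : T + (-(th / (n + 1 : ℕ))) • vecMulVec (u i) (u i) +
        vecMulVec (√(th / (n + 1 : ℕ)) • u i) (√(th / (n + 1 : ℕ)) • u i) = T := by
        rw [← lv_smul _ _ he, neg_smul]; abel
      generalize T + (-(th / (n + 1 : ℕ))) • vecMulVec (u i) (u i) = S at *
      obtain ⟨a1, _, a2⟩ := lv_rank_one S k1 (1 / 2) (by norm_num) k2 (√(th / (n + 1 : ℕ)) • u i)
        (2 * th * l / (n + 1 : ℕ)) (by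
          rw [lv_smul_norm _ _ he]
          have := mul_le_mul_of_nonneg_left (hu i) he
          refine this.trans (le_of_eq ?_)
          ring) n
      rw [eT] at a1 a2
      rw [lv_smul_quad _ _ he, lv_smul_quad _ _ he] at a1
      rw [lv_smul_quad _ _ he] at a2
      have a3 := (lv_moments S k1 (1 / 2) (by norm_num) k2 (u i)).1 n
      have a4 := lv_pow_exp (2 * th * l) (by positivity) n
      have a5 := a1.trans (mul_le_mul_of_nonneg_right a4 (mul_nonneg he a3))
      have a6 := mul_le_mul_of_nonneg_left a5 (Real.exp_pos (-(2 * th * l))).le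
      rw [← mul_assoc, ← mul_assoc (Real.exp (-(2 * th * l))), ← Real.exp_add, neg_add_cancel, Real.exp_zero, one_mul] at a6
      have a7 := mul_le_mul_of_nonneg_left a6 (by positivity : (0:ℝ) ≤ (n:ℝ) + 1)
      have a8 : ((n:ℝ) + 1) * (Real.exp (-(2 * th * l)) * (th / (n + 1 : ℕ)) * (u i ⬝ᵥ (T ^ n *ᵥ u i))) =
          th * Real.exp (-(2 * th * l)) * (u i ⬝ᵥ (T ^ n *ᵥ u i)) := by
        push_cast
        field_simp
      linarith
    calc _ ≤ ∑ i, p i * (trace (T ^ (n + 1)) - th * Real.exp (-(2 * th * l)) * (u i ⬝ᵥ (T ^ n *ᵥ u i))) :=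
          Finset.sum_le_sum fun i _ => mul_le_mul_of_nonneg_left (hstep i) (hp i)
      _ = trace (T ^ (n + 1)) - th * Real.exp (-(2 * th * l)) * trace (T ^ n) := by
          rw [← hE (T ^ n)]
          simp only [mul_sub, Finset.sum_sub_distrib, ← Finset.sum_mul, hsum, Finset.mul_sum, one_mul]
          congr 1
          exact Finset.sum_congr rfl fun i _ => by ring
      _ ≤ (1 - th * Real.exp (-(2 * th * l))) * trace (T ^ (n + 1)) := by
          have : th * Real.exp (-(2 * th * l)) * trace (T ^ (n + 1)) ≤
              th * Real.exp (-(2 * th * l)) * trace (T ^ n) := by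
            apply mul_le_mul_of_nonneg_left _ (by positivity)
            linarith
          linarith
      _ ≤ _ := by
          apply mul_le_mul_of_nonneg_right _ g0
          linarith [Real.add_one_le_exp (-(th * Real.exp (-(2 * th * l))))]
  · refine ⟨isHermitian_one, fun x => ?_, fun x => by simp⟩
    have hxx : 0 ≤ x ⬝ᵥ x := by simpa using dotProduct_star_self_nonneg x
    rw [one_mulVec]
    nlinarith

theorem lv_point {d l r : ℕ} (hr : 0 < r) (u : Fin d → Fin l → ℝ) (hu : ∀ i, u i ⬝ᵥ u i ≤ l)
    (th : ℝ) (hth : 0 ≤ th) (n : ℕ) (hn : r * (th * l / (n + 1 : ℕ)) ≤ 1 / 2)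
    (e : ℝ) (he : 0 < e) (he1 : e ≤ 1 / 2) (hl : 0 < l) (j : Fin r → Fin d)
    (hj : ¬ specNorm (1 - (1 / (r : ℝ)) • ∑ t, vecMulVec (u (j t)) (u (j t))) ≤ e) :
    1 ≤ trace ((1 + ∑ t, (th / (n + 1 : ℕ)) • vecMulVec (u (j t)) (u (j t))) ^ (n + 1)) /
        (1 + th * r * (1 + e) / (n + 1 : ℕ)) ^ (n + 1) ∨
    1 ≤ trace ((1 + ∑ t, (-(th / (n + 1 : ℕ))) • vecMulVec (u (j t)) (u (j t))) ^ (n + 1)) /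
        (1 + -(th * r * (1 - e)) / (n + 1 : ℕ)) ^ (n + 1) := by
  have hN : (0:ℝ) < (n + 1 : ℕ) := by positivity
  have hr' : (0:ℝ) < r := by exact_mod_cast hr
  have het : 0 ≤ th / (n + 1 : ℕ) := by positivity
  simp only [← Finset.smul_sum]
  set G := ∑ t, vecMulVec (u (j t)) (u (j t)) with hG
  have hGh : G.IsHermitian := by
    unfold IsHermitian
    rw [hG, conjTranspose_sum]
    refine Finset.sum_congr rfl fun t _ => ?_
    rw [conjTranspose_eq_transpose_of_trivial, transpose_vecMulVec]
  have hGs : ∀ s : ℝ, (1 + s • G).IsHermitian := by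
    intro s
    refine isHermitian_one.add ?_
    unfold IsHermitian
    rw [conjTranspose_smul, hGh.eq]; simp
  have hGq : ∀ x, x ⬝ᵥ (G *ᵥ x) = ∑ t, (u (j t) ⬝ᵥ x) ^ 2 := by
    intro x
    rw [hG, sum_mulVec, dotProduct_sum]
    exact Finset.sum_congr rfl fun t _ => lv_quad _ _
  have hG0 : ∀ x, 0 ≤ x ⬝ᵥ (G *ᵥ x) := by
    intro x; rw [hGq]; exact Finset.sum_nonneg fun _ _ => sq_nonneg _
  have hxx : ∀ x : Fin l → ℝ, 0 ≤ x ⬝ᵥ x := fun x => by simpa using dotProduct_star_self_nonneg x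
  have hG1 : ∀ x, x ⬝ᵥ (G *ᵥ x) ≤ r * (l * (x ⬝ᵥ x)) := by
    intro x; rw [hGq]
    calc _ ≤ ∑ t : Fin r, (l * (x ⬝ᵥ x) : ℝ) := Finset.sum_le_sum fun t _ =>
          (lv_cs _ _).trans (mul_le_mul_of_nonneg_right (hu _) (hxx x))
      _ = _ := by simp
  have hs : ∀ (s : ℝ) x, x ⬝ᵥ ((1 + s • G) *ᵥ x) = x ⬝ᵥ x + s * (x ⬝ᵥ (G *ᵥ x)) := by
    intro s x
    rw [add_mulVec, dotProduct_add, smul_mulVec, dotProduct_smul, one_mulVec, smul_eq_mul]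
  have hex : ∃ x : Fin l → ℝ, x ⬝ᵥ x = 1 ∧ e < |x ⬝ᵥ ((1 - (1 / (r : ℝ)) • G) *ᵥ x)| := by
    by_contra hcon
    push Not at hcon
    refine hj (lv_specNorm _ ?_ e he.le hcon)
    have := hGs (-(1 / (r : ℝ)))
    rwa [neg_smul, ← sub_eq_add_neg] at this
  obtain ⟨x, hx1, hx⟩ := hex
  have e1 : x ⬝ᵥ ((1 - (1 / (r : ℝ)) • G) *ᵥ x) = 1 - (x ⬝ᵥ (G *ᵥ x)) / r := by
    rw [sub_eq_add_neg, ← neg_smul, hs, hx1]; ring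
  rw [e1, lt_abs] at hx
  rcases hx with hx | hx
  · right
    have h1 : x ⬝ᵥ (G *ᵥ x) ≤ r * (1 - e) := by
      have : x ⬝ᵥ (G *ᵥ x) / r ≤ 1 - e := by linarith
      rw [div_le_iff₀ hr'] at this; linarith
    have h2 : (0:ℝ) < 1 + -(th * r * (1 - e)) / (n + 1 : ℕ) := by
      have : th * r * (1 - e) / (n + 1 : ℕ) ≤ r * (th * l / (n + 1 : ℕ)) := by
        rw [← mul_div_assoc]
        have : (1:ℝ) ≤ l := by exact_mod_cast hl
        have h3 : th * r * (1 - e) ≤ r * (th * l) := by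
          have : (1 - e) ≤ l := by linarith
          calc th * r * (1 - e) ≤ th * r * l := by gcongr
            _ = _ := by ring
        gcongr
      rw [neg_div]; linarith
    rw [one_le_div (pow_pos h2 _)]
    refine lv_trace_ge _ (hGs _) ?_ x hx1 _ h2.le ?_ _
    · intro y
      rw [hs]
      have := mul_le_mul_of_nonneg_left (hG1 y) het
      have e3 : th / (n + 1 : ℕ) * (r * (l * (y ⬝ᵥ y))) = r * (th * l / (n + 1 : ℕ)) * (y ⬝ᵥ y) := by ring
      rw [e3] at this
      have := mul_le_mul_of_nonneg_right hn (hxx y)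
      linarith [hxx y]
    · rw [hs, hx1]
      have := mul_le_mul_of_nonneg_left h1 het
      have e4 : -(th * r * (1 - e)) / (n + 1 : ℕ) = -(th / (n + 1 : ℕ) * (r * (1 - e))) := by ring
      rw [e4]; linarith
  · left
    have h1 : r * (1 + e) ≤ x ⬝ᵥ (G *ᵥ x) := by
      have : 1 + e ≤ x ⬝ᵥ (G *ᵥ x) / r := by linarith
      rw [le_div_iff₀ hr'] at this; linarith
    have h2 : (0:ℝ) < 1 + th * r * (1 + e) / (n + 1 : ℕ) := by positivity
    rw [one_le_div (pow_pos h2 _)]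
    refine lv_trace_ge _ (hGs _) ?_ x hx1 _ h2.le ?_ _
    · intro y
      rw [hs]
      have := mul_nonneg het (hG0 y)
      linarith [hxx y]
    · rw [hs, hx1]
      have := mul_le_mul_of_nonneg_left h1 het
      have e4 : th * r * (1 + e) / (n + 1 : ℕ) = th / (n + 1 : ℕ) * (r * (1 + e)) := by ring
      rw [e4]; linarith

theorem lv_nonneg {d l r : ℕ} (u : Fin d → Fin l → ℝ) (hu : ∀ i, u i ⬝ᵥ u i ≤ l) (s : ℝ)
    (hs : 0 ≤ 1 + r * (l * min s 0)) (j : Fin r → Fin d) (n : ℕ) :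
    0 ≤ trace ((1 + ∑ t, s • vecMulVec (u (j t)) (u (j t))) ^ n) := by
  have hxx : ∀ x : Fin l → ℝ, 0 ≤ x ⬝ᵥ x := fun x => by simpa using dotProduct_star_self_nonneg x
  refine (lv_trace_step_ge _ ?_ 0 le_rfl (fun x => ?_) n).2
  · refine isHermitian_one.add ?_
    unfold IsHermitian
    rw [conjTranspose_sum]
    exact Finset.sum_congr rfl fun t _ => lv_herm _ _
  · rw [add_mulVec, dotProduct_add, one_mulVec, sum_mulVec, dotProduct_sum, zero_mul]
    have : ∑ t : Fin r, (l * min s 0) * (x ⬝ᵥ x) ≤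
        ∑ t, x ⬝ᵥ ((s • vecMulVec (u (j t)) (u (j t))) *ᵥ x) := by
      refine Finset.sum_le_sum fun t _ => ?_
      rw [smul_mulVec, dotProduct_smul, lv_quad, smul_eq_mul]
      have h1 := (lv_cs (u (j t)) x).trans (mul_le_mul_of_nonneg_right (hu (j t)) (hxx x))
      have h2 := mul_le_mul_of_nonneg_right (min_le_left s 0) (sq_nonneg (u (j t) ⬝ᵥ x))
      have h3 := mul_le_mul_of_nonpos_left h1 (min_le_right s 0)
      linarith
    simp only [Finset.sum_const, Finset.card_univ, Fintype.card_fin, nsmul_eq_mul] at this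
    have := mul_nonneg hs (hxx x)
    linarith

theorem lv_main {d l r : ℕ} (hl : 0 < l) (hr : 0 < r) (p : Fin d → ℝ) (hp : ∀ i, 0 ≤ p i)
    (hsum : ∑ i, p i = 1)
    (u : Fin d → Fin l → ℝ) (hu : ∀ i, u i ⬝ᵥ u i ≤ l)
    (hE : ∀ M : Matrix (Fin l) (Fin l) ℝ, ∑ i, p i * (u i ⬝ᵥ (M *ᵥ u i)) = trace M)
    (e : ℝ) (he : 0 < e) (he1 : e ≤ 1 / 2) (S : Set (Fin r → Fin d))
    (hS : ∀ j, specNorm (1 - (1 / (r : ℝ)) • ∑ t, vecMulVec (u (j t)) (u (j t))) ≤ e → j ∈ S) :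
    1 - 2 * (l * Real.exp (-(r * e ^ 2 / (8 * l)))) ≤
      ∑ j, Set.indicator S (fun j => ∏ t, p (j t)) j := by
  have hl' : (0:ℝ) < l := by exact_mod_cast hl
  have hr' : (0:ℝ) < r := by exact_mod_cast hr
  set th : ℝ := e / (4 * l) with hthd
  have hth : 0 < th := by positivity
  have hthl : th * l = e / 4 := by rw [hthd]; field_simp
  set P := ∑ j, Set.indicator S (fun j => ∏ t, p (j t)) j with hP
  set a := Real.exp (th * Real.exp (th * l)) ^ r * l with ha
  set b := Real.exp (-(th * Real.exp (-(2 * th * l)))) ^ r * l with hb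
  have hbound : ∀ n : ℕ, r * (th * l / (n + 1 : ℕ)) ≤ 1 / 2 →
      1 - a / (1 + th * r * (1 + e) / (n + 1 : ℕ)) ^ (n + 1)
        - b / (1 + -(th * r * (1 - e)) / (n + 1 : ℕ)) ^ (n + 1) ≤ P := by
    intro n hn
    have h2 : (0:ℝ) < 1 + -(th * r * (1 - e)) / (n + 1 : ℕ) := by
      have : th * r * (1 - e) / (n + 1 : ℕ) ≤ r * (th * l / (n + 1 : ℕ)) := by
        rw [← mul_div_assoc]
        have : (1:ℝ) ≤ l := by exact_mod_cast hl
        have h3 : th * r * (1 - e) ≤ r * (th * l) := by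
          have : (1 - e) ≤ l := by linarith
          calc th * r * (1 - e) ≤ th * r * l := by gcongr
            _ = _ := by ring
        gcongr
      rw [neg_div]; linarith
    have h1 : (0:ℝ) < 1 + th * r * (1 + e) / (n + 1 : ℕ) := by positivity
    have up := lv_upper p hp hsum u hu hE th hth.le r n
    have lo := lv_lower p hp hsum u hu hE th hth.le r n hn
    set A := (1 + th * r * (1 + e) / (n + 1 : ℕ)) ^ (n + 1) with hA
    set B := (1 + -(th * r * (1 - e)) / (n + 1 : ℕ)) ^ (n + 1) with hB
    have hA0 : 0 < A := pow_pos h1 _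
    have hB0 : 0 < B := pow_pos h2 _
    have up' := div_le_div_of_nonneg_right up hA0.le
    have lo' := div_le_div_of_nonneg_right lo hB0.le
    have tot : ∑ j : Fin r → Fin d, ∏ t, p (j t) = 1 := by
      rw [← Fintype.piFinset_univ, ← Finset.prod_univ_sum]
      simp [hsum]
    have : ∑ j : Fin r → Fin d, ∏ t, p (j t) ≤ ∑ j, (Set.indicator S (fun j => ∏ t, p (j t)) j +
        ((∏ t, p (j t)) * trace ((1 + ∑ t, (th / (n + 1 : ℕ)) • vecMulVec (u (j t)) (u (j t))) ^ (n + 1)) / A +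
        (∏ t, p (j t)) * trace ((1 + ∑ t, (-(th / (n + 1 : ℕ))) • vecMulVec (u (j t)) (u (j t))) ^ (n + 1)) / B)) := by
      refine Finset.sum_le_sum fun j _ => ?_
      have hw : 0 ≤ ∏ t, p (j t) := Finset.prod_nonneg fun t _ => hp _
      have n1 := div_nonneg (lv_nonneg u hu (th / (n + 1 : ℕ)) (by
        rw [min_eq_right (by positivity)]; simp) j (n + 1)) hA0.le
      have n2 := div_nonneg (lv_nonneg u hu (-(th / (n + 1 : ℕ))) (by
        rw [min_eq_left (neg_nonpos.2 (by positivity))]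
        have : (r:ℝ) * (l * -(th / (n + 1 : ℕ))) = -(r * (th * l / (n + 1 : ℕ))) := by ring
        rw [this]; linarith) j (n + 1)) hB0.le
      rw [mul_div_assoc, mul_div_assoc]
      have m1 := mul_nonneg hw n1
      have m2 := mul_nonneg hw n2
      by_cases hj : j ∈ S
      · rw [Set.indicator_of_mem hj]
        linarith
      · rw [Set.indicator_of_notMem hj]
        rcases lv_point hr u hu th hth.le n hn e he he1 hl j (fun h => hj (hS j h)) with h | h
        · have := mul_le_mul_of_nonneg_left h hw
          linarith
        · have := mul_le_mul_of_nonneg_left h hw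
          linarith
    rw [tot, Finset.sum_add_distrib, Finset.sum_add_distrib, ← Finset.sum_div, ← Finset.sum_div] at this
    linarith
  have lim : Filter.Tendsto (fun n : ℕ => 1 - a / (1 + th * r * (1 + e) / (n + 1 : ℕ)) ^ (n + 1)
        - b / (1 + -(th * r * (1 - e)) / (n + 1 : ℕ)) ^ (n + 1)) Filter.atTop
      (nhds (1 - a / Real.exp (th * r * (1 + e)) - b / Real.exp (-(th * r * (1 - e))))) := by
    have l1 := (Real.tendsto_one_add_div_pow_exp (th * r * (1 + e))).comp (Filter.tendsto_add_atTop_nat 1)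
    have l2 := (Real.tendsto_one_add_div_pow_exp (-(th * r * (1 - e)))).comp (Filter.tendsto_add_atTop_nat 1)
    exact (tendsto_const_nhds.sub (tendsto_const_nhds.div l1 (Real.exp_pos _).ne')).sub
      (tendsto_const_nhds.div l2 (Real.exp_pos _).ne')
  have ev : ∀ᶠ n : ℕ in Filter.atTop, r * (th * l / (n + 1 : ℕ)) ≤ 1 / 2 := by
    have : Filter.Tendsto (fun n : ℕ => r * (th * l / (n + 1 : ℕ))) Filter.atTop (nhds (r * 0)) :=
      ((tendsto_const_div_atTop_nhds_zero_nat (th * l)).comp (Filter.tendsto_add_atTop_nat 1)).const_mul _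
    rw [mul_zero] at this
    exact this.eventually_le_const (by norm_num)
  have fin := le_of_tendsto lim (ev.mono hbound)
  have hrth : th * r * (e / 2) = r * e ^ 2 / (8 * l) := by rw [hthd]; field_simp; ring
  have ea : a / Real.exp (th * r * (1 + e)) ≤ l * Real.exp (-(r * e ^ 2 / (8 * l))) := by
    rw [ha, ← Real.exp_nat_mul, mul_comm, mul_div_assoc, ← Real.exp_sub]
    apply mul_le_mul_of_nonneg_left _ hl'.le
    apply Real.exp_le_exp.2
    have hx : Real.exp (th * l) ≤ 1 + e / 2 := by
      rw [hthl]
      have h1 : 1 - e / 4 ≤ Real.exp (-(e / 4)) := by linarith [Real.add_one_le_exp (-(e / 4))]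
      rw [Real.exp_neg] at h1
      have hpos := Real.exp_pos (e / 4)
      have h2 : (1 - e / 4) * Real.exp (e / 4) ≤ 1 := by
        calc _ ≤ (Real.exp (e / 4))⁻¹ * Real.exp (e / 4) := by gcongr
          _ = 1 := inv_mul_cancel₀ hpos.ne'
      by_contra hcon
      push Not at hcon
      nlinarith
    rw [← hrth]
    have := mul_le_mul_of_nonneg_left hx (by positivity : 0 ≤ th * r)
    linarith
  have eb : b / Real.exp (-(th * r * (1 - e))) ≤ l * Real.exp (-(r * e ^ 2 / (8 * l))) := by
    rw [hb, ← Real.exp_nat_mul, mul_comm, mul_div_assoc, ← Real.exp_sub]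
    apply mul_le_mul_of_nonneg_left _ hl'.le
    apply Real.exp_le_exp.2
    have hx : 1 - e / 2 ≤ Real.exp (-(2 * th * l)) := by
      have : -(2 * th * l) = -(e / 2) := by linarith
      rw [this]
      linarith [Real.add_one_le_exp (-(e / 2))]
    rw [← hrth]
    have := mul_le_mul_of_nonneg_left hx (by positivity : 0 ≤ th * r)
    linarith
  linarith

/-- **Leverage-score sampling (Lemma 3).** There is an absolute constant `c > 0` such
that: for `ε ∈ (0,1/2]`, `δ ∈ (0,1)`, `V ∈ ℝ^{d×ℓ}` with orthonormal columns, and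
`r ≥ c·(ℓ/ε²)·log(ℓ/(ε²√δ))`, if `r` indices are drawn i.i.d. from the leverage-score
distribution `(p_1,…,p_d)` and `R` is the corresponding sampling-and-rescaling matrix,
then with probability at least `1 − δ`,
`‖VᵀV − VᵀRRᵀV‖₂ = ‖I_ℓ − VᵀRRᵀV‖₂ ≤ ε`.  (The probability of the event is the sum,
over index tuples `j` in the event, of `∏ t, p_{j_t}`.) -/
theorem leverage_score_sampling :
    ∃ c : ℝ, 0 < c ∧
      ∀ (d ℓ : ℕ), 0 < ℓ →
      ∀ ε δ : ℝ, ε ∈ Set.Ioc (0 : ℝ) (1 / 2) → δ ∈ Set.Ioo (0 : ℝ) 1 →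
      ∀ V : Matrix (Fin d) (Fin ℓ) ℝ, Vᵀ * V = 1 →
      ∀ r : ℕ, c * ((ℓ : ℝ) / ε ^ 2) * Real.log ((ℓ : ℝ) / (ε ^ 2 * Real.sqrt δ)) ≤ (r : ℝ) →
        1 - δ ≤ ∑ j : Fin r → Fin d,
          Set.indicator
            {j : Fin r → Fin d |
              specNorm (Vᵀ * V - Vᵀ * lvgMatrix V r j * (lvgMatrix V r j)ᵀ * V)
                = specNorm (1 - Vᵀ * lvgMatrix V r j * (lvgMatrix V r j)ᵀ * V) ∧
              specNorm (1 - Vᵀ * lvgMatrix V r j * (lvgMatrix V r j)ᵀ * V) ≤ ε}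
            (fun j => ∏ t, lvgProb V (j t)) j := by
  refine ⟨16, by norm_num, ?_⟩
  intro d l hl ε δ hε hδ V hV r hr
  obtain ⟨he, he1⟩ := hε
  obtain ⟨hd0, hd1⟩ := hδ
  have hl' : (0:ℝ) < l := by exact_mod_cast hl
  have hl1 : (1:ℝ) ≤ l := by exact_mod_cast hl
  have hsd : 0 < Real.sqrt δ := Real.sqrt_pos.2 hd0
  have hsd1 : Real.sqrt δ < 1 := by rw [Real.sqrt_lt' one_pos]; simpa using hd1
  have hX : 0 < (l : ℝ) / (ε ^ 2 * Real.sqrt δ) := by positivity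
  have he2 : ε ^ 2 ≤ 1 / 4 := by nlinarith
  have hX1 : 1 < (l : ℝ) / (ε ^ 2 * Real.sqrt δ) := by
    rw [one_lt_div (by positivity)]
    nlinarith [sq_nonneg ε]
  have hlog : 0 < Real.log ((l : ℝ) / (ε ^ 2 * Real.sqrt δ)) := Real.log_pos hX1
  have hr' : (0:ℝ) < r := lt_of_lt_of_le (by positivity) hr
  have hr0 : 0 < r := by exact_mod_cast hr'
  have hp : ∀ i, 0 ≤ lvgProb V i := fun i =>
    div_nonneg (Finset.sum_nonneg fun k _ => sq_nonneg _) hl'.le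
  have hpl : ∀ i, lvgProb V i * l = V i ⬝ᵥ V i := by
    intro i
    unfold lvgProb
    rw [div_mul_cancel₀ _ hl'.ne']
    simp [dotProduct, pow_two]
  have hrow : ∀ i, lvgProb V i = 0 → V i = 0 := by
    intro i hi
    have := hpl i
    rw [hi, zero_mul] at this
    exact dotProduct_self_eq_zero.1 this.symm
  have htr : ∀ M : Matrix (Fin l) (Fin l) ℝ, ∑ i, V i ⬝ᵥ (M *ᵥ V i) = trace M := by
    intro M
    have : trace M = trace (V * M * Vᵀ) := by
      rw [trace_mul_comm, ← Matrix.mul_assoc, hV, Matrix.one_mul]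
    rw [this]
    simp only [trace, diag]
    refine Finset.sum_congr rfl fun i _ => ?_
    rw [Matrix.mul_assoc, Matrix.mul_apply]
    simp [dotProduct, mulVec, Matrix.mul_apply]
  have hsum : ∑ i, lvgProb V i = 1 := by
    have h1 := htr 1
    simp only [one_mulVec, ← hpl, ← Finset.sum_mul, trace_one, Fintype.card_fin] at h1
    exact mul_right_cancel₀ hl'.ne' (h1.trans (one_mul _).symm)
  set u : Fin d → Fin l → ℝ := fun i => √(1 / lvgProb V i) • V i with hu_def
  have hinv : ∀ i, 0 ≤ 1 / lvgProb V i := fun i => one_div_nonneg.2 (hp i)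
  have hu : ∀ i, u i ⬝ᵥ u i ≤ l := by
    intro i
    rw [hu_def]
    simp only
    rw [lv_smul_norm _ _ (hinv i), ← hpl]
    rcases eq_or_ne (lvgProb V i) 0 with h | h
    · rw [h]; simp
    · rw [← mul_assoc, one_div_mul_cancel h, one_mul]
  have hE : ∀ M : Matrix (Fin l) (Fin l) ℝ,
      ∑ i, lvgProb V i * (u i ⬝ᵥ (M *ᵥ u i)) = trace M := by
    intro M
    rw [← htr M]
    refine Finset.sum_congr rfl fun i _ => ?_
    rw [hu_def]
    simp only
    rw [lv_smul_quad _ _ (hinv i)]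
    rcases eq_or_ne (lvgProb V i) 0 with h | h
    · rw [hrow i h]; simp
    · rw [← mul_assoc, mul_one_div_cancel h, one_mul]
  have hmat : ∀ j : Fin r → Fin d, Vᵀ * lvgMatrix V r j * (lvgMatrix V r j)ᵀ * V =
      (1 / (r : ℝ)) • ∑ t, vecMulVec (u (j t)) (u (j t)) := by
    intro j
    have h1 : ∀ a t, (Vᵀ * lvgMatrix V r j) a t =
        V (j t) a * (1 / Real.sqrt (r * lvgProb V (j t))) := by
      intro a t
      simp [Matrix.mul_apply, lvgMatrix]
    have h2 : (lvgMatrix V r j)ᵀ * V = (Vᵀ * lvgMatrix V r j)ᵀ := by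
      rw [transpose_mul, transpose_transpose]
    rw [Matrix.mul_assoc, h2]
    ext a b
    rw [Matrix.mul_apply, Matrix.smul_apply, Matrix.sum_apply, smul_eq_mul, Finset.mul_sum]
    refine Finset.sum_congr rfl fun t _ => ?_
    rw [transpose_apply, h1, h1, hu_def]
    simp only
    rw [← lv_smul _ _ (hinv _), Matrix.smul_apply, vecMulVec_apply, smul_eq_mul]
    have h3 : (1 / Real.sqrt (r * lvgProb V (j t))) * (1 / Real.sqrt (r * lvgProb V (j t))) =
        1 / (r : ℝ) * (1 / lvgProb V (j t)) := by
      rw [one_div_mul_one_div, Real.mul_self_sqrt (mul_nonneg hr'.le (hp _)), one_div_mul_one_div]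
    calc _ = (1 / Real.sqrt (r * lvgProb V (j t))) * (1 / Real.sqrt (r * lvgProb V (j t))) *
          (V (j t) a * V (j t) b) := by ring
      _ = _ := by rw [h3]; ring
  refine le_trans ?_ (lv_main hl hr0 (lvgProb V) hp hsum u hu hE ε he he1 _ ?_)
  · skip
    have h1 : 2 * Real.log ((l : ℝ) / (ε ^ 2 * Real.sqrt δ)) ≤ r * ε ^ 2 / (8 * l) := by
      rw [le_div_iff₀ (by positivity)]
      have := mul_le_mul_of_nonneg_right hr (by positivity : 0 ≤ ε ^ 2)
      refine le_trans (le_of_eq ?_) this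
      field_simp
      ring
    have h2 : Real.exp (-(r * ε ^ 2 / (8 * l))) ≤ (ε ^ 2 * Real.sqrt δ / l) ^ 2 := by
      calc _ ≤ Real.exp (-(2 * Real.log ((l : ℝ) / (ε ^ 2 * Real.sqrt δ)))) :=
            Real.exp_le_exp.2 (neg_le_neg h1)
        _ = _ := by
          rw [Real.exp_neg, two_mul, Real.exp_add, Real.exp_log hX, ← pow_two, ← inv_pow, inv_div]
    have h3 : (l:ℝ) * (ε ^ 2 * Real.sqrt δ / l) ^ 2 = ε ^ 4 * δ / l := by
      rw [div_pow, mul_pow, Real.sq_sqrt hd0.le]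
      field_simp
    have h4 : ε ^ 4 * δ / l ≤ δ / 2 := by
      have : ε ^ 4 ≤ 1 / 2 := by nlinarith [sq_nonneg ε]
      calc ε ^ 4 * δ / l ≤ ε ^ 4 * δ := div_le_self (by positivity) hl1
        _ ≤ δ / 2 := by nlinarith
    have h5 := mul_le_mul_of_nonneg_left h2 hl'.le
    linarith
  · intro j hj
    refine ⟨by rw [hV], ?_⟩
    rw [hmat j]
    exact hj
end

section
/- Let X ∈ ℝ^{p×d} have rank ρ and compact singular value decomposition X = UΣV^T, let R ∈ ℝ^{d×r} be any matrix, and set E = I_ρ − V^T R R^T V. If ‖E‖₂ < 1, then for every u ∈ ℝ^p, | ‖X^T u‖₂² − ‖R^T X^T u‖₂² | ≤ (‖E‖₂ / (1 − ‖E‖₂)) · ‖R^T X^T u‖₂². -/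
open Matrix

theorem euclNorm_eq_norm {n : ℕ} (x : Fin n → ℝ) : euclNorm x = ‖WithLp.toLp 2 x‖ := by
  rw [EuclideanSpace.norm_eq]
  simp [euclNorm]

theorem euclNorm_sq_dot {n : ℕ} (x : Fin n → ℝ) : euclNorm x ^ 2 = x ⬝ᵥ x := by
  unfold euclNorm
  rw [Real.sq_sqrt (Finset.sum_nonneg fun i _ => sq_nonneg _)]
  simp [dotProduct, sq]

theorem specNorm_nonneg {m n : ℕ} (A : Matrix (Fin m) (Fin n) ℝ) : 0 ≤ specNorm A := by
  apply Real.sSup_nonneg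
  rintro c ⟨x, -, rfl⟩
  exact Real.sqrt_nonneg _

open scoped Matrix.Norms.L2Operator in
theorem euclNorm_mulVec_le {m n : ℕ} (A : Matrix (Fin m) (Fin n) ℝ) (x : Fin n → ℝ) :
    euclNorm (A *ᵥ x) ≤ specNorm A * euclNorm x := by
  have hb : BddAbove {c : ℝ | ∃ x : Fin n → ℝ, euclNorm x = 1 ∧ c = euclNorm (A.mulVec x)} := by
    refine ⟨‖A‖, ?_⟩
    rintro c ⟨y, hy, rfl⟩
    have h := Matrix.l2_opNorm_mulVec A (WithLp.toLp 2 y)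
    rw [← euclNorm_eq_norm y, hy, mul_one] at h
    rw [euclNorm_eq_norm]
    exact h
  have hs : ∀ (k : ℕ) (c : ℝ) (y : Fin k → ℝ), euclNorm (c • y) = |c| * euclNorm y := by
    intro k c y
    rw [euclNorm_eq_norm, euclNorm_eq_norm, WithLp.toLp_smul, norm_smul, Real.norm_eq_abs]
  have hnn : 0 ≤ euclNorm x := Real.sqrt_nonneg _
  rcases hnn.eq_or_lt with h0 | hpos
  · have hx : x = 0 := by
      have h1 := h0.symm
      rw [euclNorm_eq_norm, norm_eq_zero] at h1
      simpa using h1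
    subst hx
    simp [euclNorm]
  · have hinv : |(euclNorm x)⁻¹| = (euclNorm x)⁻¹ := abs_of_pos (inv_pos.2 hpos)
    have h := le_csSup hb ⟨(euclNorm x)⁻¹ • x, by
      rw [hs, hinv, inv_mul_cancel₀ hpos.ne'], rfl⟩
    rw [Matrix.mulVec_smul, hs, hinv, inv_mul_le_iff₀ hpos] at h
    rw [mul_comm]
    exact h

theorem abs_dot_le {n : ℕ} (x y : Fin n → ℝ) : |x ⬝ᵥ y| ≤ euclNorm x * euclNorm y := by
  have h := abs_real_inner_le_norm (WithLp.toLp 2 y) (WithLp.toLp 2 x)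
  rw [← euclNorm_eq_norm, ← euclNorm_eq_norm, EuclideanSpace.inner_toLp_toLp] at h
  simpa [mul_comm] using h

/-- If `X = UΣVᵀ` is a compact SVD of the rank-`ρ` matrix `X ∈ ℝ^{p×d}`,
`R ∈ ℝ^{d×r}` is any matrix, `E = I_ρ − VᵀRRᵀV` and `‖E‖₂ < 1`, then for every
`u ∈ ℝ^p`, `| ‖Xᵀu‖₂² − ‖RᵀXᵀu‖₂² | ≤ (‖E‖₂/(1 − ‖E‖₂)) ‖RᵀXᵀu‖₂²`. -/
theorem sampled_quadratic_form_error_relative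
    (p d r ρ : ℕ)
    (X : Matrix (Fin p) (Fin d) ℝ) (hrank : X.rank = ρ)
    (U : Matrix (Fin p) (Fin ρ) ℝ) (S : Matrix (Fin ρ) (Fin ρ) ℝ)
    (V : Matrix (Fin d) (Fin ρ) ℝ)
    (hU : Uᵀ * U = 1) (hV : Vᵀ * V = 1)
    (hS : ∃ σ : Fin ρ → ℝ, (∀ i, 0 < σ i) ∧ S = Matrix.diagonal σ)
    (hX : X = U * S * Vᵀ)
    (R : Matrix (Fin d) (Fin r) ℝ)
    (hE : specNorm ((1 : Matrix (Fin ρ) (Fin ρ) ℝ) - Vᵀ * R * Rᵀ * V) < 1)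
    (u : Fin p → ℝ) :
    |euclNorm (Xᵀ.mulVec u) ^ 2 - euclNorm (Rᵀ.mulVec (Xᵀ.mulVec u)) ^ 2|
      ≤ specNorm ((1 : Matrix (Fin ρ) (Fin ρ) ℝ) - Vᵀ * R * Rᵀ * V)
          / (1 - specNorm ((1 : Matrix (Fin ρ) (Fin ρ) ℝ) - Vᵀ * R * Rᵀ * V))
          * euclNorm (Rᵀ.mulVec (Xᵀ.mulVec u)) ^ 2 := by
  obtain ⟨w, hw⟩ : ∃ w, Xᵀ *ᵥ u = V *ᵥ w := by
    refine ⟨(U * S)ᵀ *ᵥ u, ?_⟩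
    rw [hX, Matrix.transpose_mul, Matrix.transpose_transpose, Matrix.mulVec_mulVec]
  rw [hw]
  have h1 : euclNorm (V *ᵥ w) ^ 2 = euclNorm w ^ 2 := by
    rw [euclNorm_sq_dot, euclNorm_sq_dot, Matrix.dotProduct_mulVec, ← Matrix.mulVec_transpose,
      Matrix.mulVec_mulVec, hV, Matrix.one_mulVec]
  have h2 : euclNorm (Rᵀ *ᵥ (V *ᵥ w)) ^ 2 = w ⬝ᵥ ((Vᵀ * R * Rᵀ * V) *ᵥ w) := by
    rw [euclNorm_sq_dot, Matrix.dotProduct_mulVec, ← Matrix.mulVec_transpose,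
      Matrix.transpose_transpose, Matrix.dotProduct_mulVec, ← Matrix.mulVec_transpose,
      dotProduct_comm]
    simp only [Matrix.mulVec_mulVec, Matrix.mul_assoc]
  have h3 := abs_dot_le w (((1 : Matrix (Fin ρ) (Fin ρ) ℝ) - Vᵀ * R * Rᵀ * V) *ᵥ w)
  have h4 := euclNorm_mulVec_le ((1 : Matrix (Fin ρ) (Fin ρ) ℝ) - Vᵀ * R * Rᵀ * V) w
  have h5 := specNorm_nonneg ((1 : Matrix (Fin ρ) (Fin ρ) ℝ) - Vᵀ * R * Rᵀ * V)
  have h6 : 0 ≤ euclNorm w := Real.sqrt_nonneg _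
  have h7 := h3.trans (mul_le_mul_of_nonneg_left h4 h6)
  rw [Matrix.sub_mulVec, Matrix.one_mulVec, dotProduct_sub, ← h2, ← euclNorm_sq_dot] at h7
  rw [h1]
  generalize specNorm ((1 : Matrix (Fin ρ) (Fin ρ) ℝ) - Vᵀ * R * Rᵀ * V) = e at *
  generalize euclNorm (Rᵀ *ᵥ (V *ᵥ w)) ^ 2 = b at *
  have h8 : |euclNorm w ^ 2 - b| ≤ e * euclNorm w ^ 2 := h7.trans (le_of_eq (by ring))
  have h9 : (1 - e) * euclNorm w ^ 2 ≤ b := by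
    have := (abs_le.1 h8).2
    linarith
  refine h8.trans ?_
  rw [div_mul_eq_mul_div, le_div_iff₀ (by linarith)]
  nlinarith [mul_le_mul_of_nonneg_left h9 h5]
end

section
/- In the SVM dual setup, let X ∈ ℝ^{p×d} have rank ρ and compact singular value decomposition X = UΣV^T, let R ∈ ℝ^{d×r} be any matrix, and set E = I_ρ − V^T R R^T V. Suppose α* ∈ K maximizes f over K and α̃* ∈ K maximizes f̃ over K. Then f(α*) ≥ f̃(α̃*) − (1/2) · (Y α̃*)^T U Σ E Σ U^T (Y α̃*). -/
open Matrix

/-- The SVM dual feasible set `K = {α : 0 ≤ αᵢ ≤ C, Σᵢ yᵢαᵢ = 0}`. -/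
def svmFeasible {p : ℕ} (y : Fin p → ℝ) (C : ℝ) (α : Fin p → ℝ) : Prop :=
  (∀ i, 0 ≤ α i ∧ α i ≤ C) ∧ ∑ i, y i * α i = 0

/-- The SVM dual objective `f(α) = Σᵢ αᵢ − (1/2)‖XᵀYα‖₂²`, where `Y = diag(y)`. -/
noncomputable def svmDualObj {p d : ℕ} (X : Matrix (Fin p) (Fin d) ℝ) (y : Fin p → ℝ)
    (α : Fin p → ℝ) : ℝ :=
  ∑ i, α i - (1 / 2) * euclNorm (Xᵀ.mulVec ((Matrix.diagonal y).mulVec α)) ^ 2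

/-- The reduced SVM dual objective `f̃(α) = Σᵢ αᵢ − (1/2)‖RᵀXᵀYα‖₂²`. -/
noncomputable def svmDualObjRed {p d r : ℕ} (X : Matrix (Fin p) (Fin d) ℝ)
    (R : Matrix (Fin d) (Fin r) ℝ) (y : Fin p → ℝ) (α : Fin p → ℝ) : ℝ :=
  ∑ i, α i - (1 / 2) * euclNorm (Rᵀ.mulVec (Xᵀ.mulVec ((Matrix.diagonal y).mulVec α))) ^ 2

theorem euclNorm_sq_transpose_mulVec {m n : ℕ} (A : Matrix (Fin m) (Fin n) ℝ) (z : Fin m → ℝ) :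
    euclNorm (Aᵀ.mulVec z) ^ 2 = dotProduct z ((A * Aᵀ).mulVec z) := by
  unfold euclNorm
  rw [Real.sq_sqrt (Finset.sum_nonneg fun i _ => sq_nonneg _), ← Matrix.mulVec_mulVec,
    Matrix.dotProduct_mulVec, ← Matrix.mulVec_transpose]
  simp [dotProduct, sq]

/-- **Dual optimum comparison (eqn. (7) of the paper).** If `α*` maximizes the SVM
dual `f` over `K` and `α̃*` maximizes the reduced dual `f̃` over `K`, then
`f(α*) ≥ f̃(α̃*) − (1/2)(Yα̃*)ᵀ U Σ E Σ Uᵀ (Yα̃*)`, where `E = I_ρ − VᵀRRᵀV`. -/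
theorem svm_dual_optimum_comparison
    (p d r ρ : ℕ)
    (X : Matrix (Fin p) (Fin d) ℝ) (hrank : X.rank = ρ)
    (U : Matrix (Fin p) (Fin ρ) ℝ) (S : Matrix (Fin ρ) (Fin ρ) ℝ)
    (V : Matrix (Fin d) (Fin ρ) ℝ)
    (hU : Uᵀ * U = 1) (hV : Vᵀ * V = 1)
    (hS : ∃ σ : Fin ρ → ℝ, (∀ i, 0 < σ i) ∧ S = Matrix.diagonal σ)
    (hX : X = U * S * Vᵀ)
    (R : Matrix (Fin d) (Fin r) ℝ)
    (y : Fin p → ℝ) (hy : ∀ i, y i = 1 ∨ y i = -1)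
    (C : ℝ) (hC : 0 < C)
    (αs : Fin p → ℝ) (hαs : svmFeasible y C αs)
    (hαsmax : ∀ β, svmFeasible y C β → svmDualObj X y β ≤ svmDualObj X y αs)
    (αt : Fin p → ℝ) (hαt : svmFeasible y C αt)
    (hαtmax : ∀ β, svmFeasible y C β → svmDualObjRed X R y β ≤ svmDualObjRed X R y αt) :
    svmDualObj X y αs
      ≥ svmDualObjRed X R y αt
        - (1 / 2) * dotProduct ((Matrix.diagonal y).mulVec αt)
            ((U * S * ((1 : Matrix (Fin ρ) (Fin ρ) ℝ) - Vᵀ * R * Rᵀ * V) * S * Uᵀ).mulVec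
              ((Matrix.diagonal y).mulVec αt)) := by
  have hSt : Sᵀ = S := by
    obtain ⟨σ, _, rfl⟩ := hS
    simp
  have hXt : Xᵀ = V * S * Uᵀ := by
    rw [hX]
    simp [Matrix.transpose_mul, hSt, Matrix.mul_assoc]
  have key : U * S * ((1 : Matrix (Fin ρ) (Fin ρ) ℝ) - Vᵀ * R * Rᵀ * V) * S * Uᵀ
      = X * Xᵀ - (X * R) * (X * R)ᵀ := by
    have h1 : X * Xᵀ = U * S * S * Uᵀ := by
      calc X * Xᵀ = U * S * (Vᵀ * V) * S * Uᵀ := by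
            rw [hXt, hX]; simp only [Matrix.mul_assoc]
        _ = _ := by rw [hV, Matrix.mul_one]
    rw [h1, Matrix.transpose_mul, hXt, hX]
    simp only [Matrix.mul_sub, Matrix.sub_mul, Matrix.mul_one, Matrix.mul_assoc]
  have h := hαsmax αt hαt
  refine ge_iff_le.mpr (le_trans (le_of_eq ?_) h)
  unfold svmDualObj svmDualObjRed
  rw [key, Matrix.mulVec_mulVec _ Rᵀ Xᵀ, ← Matrix.transpose_mul,
    euclNorm_sq_transpose_mulVec, euclNorm_sq_transpose_mulVec, Matrix.sub_mulVec,
    dotProduct_sub]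
  ring
end
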